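/- arXiv:2103.16382 — 12 statements merged into one kernel-verified Lean document; each statement's English description precedes it below -/
import Mathlib

section
/- Let n ≥ 3. Suppose real numbers a_{i,l} (for 1 ≤ i ≤ n−1 and l ∈ {n, n+1}) and b_i (for 1 ≤ i ≤ n−1) are such that for every point x in some nonempty relatively open subset U of the cylinder C one has Σ_{i=1}^{n−1} x_i · (a_{i,n} x_n + a_{i,n+1} x_{n+1} − b_i) = 0. Then a_{i,l} = 0 for all i and l, and b_i = 0 for all i. -/
/-- The cylinder `C = {x ∈ ℝ^{n+1} : x₁² + ⋯ + x_{n−1}² = 1}` (indices `0`-based in Lean: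
the first `n−1` coordinates). -/
def cylinderSet (n : ℕ) : Set (Fin (n + 1) → ℝ) :=
  {x | ∑ i ∈ Finset.univ.filter (fun i : Fin (n + 1) => (i : ℕ) < n - 1), (x i) ^ 2 = 1}

lemma cyl_aux_exists {m : ℕ} {P : (Fin m → ℝ) → Prop} {x : Fin m → ℝ}
    (h : ∀ᶠ y in nhds x, P y) (v : Fin m → ℝ) : ∃ s : ℝ, s ≠ 0 ∧ P (x + s • v) := by
  have hc : Filter.Tendsto (fun s : ℝ => x + s • v) (nhds 0) (nhds x) := by
    have : Continuous (fun s : ℝ => x + s • v) := by fun_prop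
    simpa using this.tendsto 0
  have h1 : ∀ᶠ s in nhdsWithin (0 : ℝ) {0}ᶜ, P (x + s • v) :=
    (hc.eventually h).filter_mono nhdsWithin_le_nhds
  obtain ⟨s, hs, hs'⟩ := (h1.and self_mem_nhdsWithin).exists
  exact ⟨s, hs', hs⟩

/-- Let `n ≥ 3`. Suppose real numbers `a_{i,l}` (`1 ≤ i ≤ n−1`,
`l ∈ {n, n+1}`) and `b_i` (`1 ≤ i ≤ n−1`) are such that for every `x` in some nonempty
relatively open subset `U` of the cylinder `C` one has
`Σ_{i=1}^{n−1} x_i (a_{i,n} x_n + a_{i,n+1} x_{n+1} − b_i) = 0`.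
Then all `a_{i,l} = 0` and all `b_i = 0`.  (In Lean, `1`-based indices `1,…,n+1` become the
`0`-based indices `0,…,n` of `Fin (n+1)`: `i ≤ n−1` becomes `(i:ℕ) < n−1` and
`l ∈ {n, n+1}` becomes `n−1 ≤ (l:ℕ)`.) -/
theorem cylinder_linear_relation_vanishes
    (n : ℕ) (hn : 3 ≤ n)
    (a : Fin (n + 1) → Fin (n + 1) → ℝ) (b : Fin (n + 1) → ℝ)
    (U : Set (Fin (n + 1) → ℝ))
    (hUsub : U ⊆ cylinderSet n)
    (hUrelOpen : ∃ V : Set (Fin (n + 1) → ℝ), IsOpen V ∧ U = V ∩ cylinderSet n)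
    (hUne : U.Nonempty)
    (heq : ∀ x ∈ U,
      ∑ i ∈ Finset.univ.filter (fun i : Fin (n + 1) => (i : ℕ) < n - 1),
        x i * ((∑ l ∈ Finset.univ.filter (fun l : Fin (n + 1) => n - 1 ≤ (l : ℕ)),
          a i l * x l) - b i) = 0) :
    (∀ i l : Fin (n + 1), (i : ℕ) < n - 1 → n - 1 ≤ (l : ℕ) → a i l = 0) ∧
    (∀ i : Fin (n + 1), (i : ℕ) < n - 1 → b i = 0) := by
  obtain ⟨V, hV, rfl⟩ := hUrelOpen
  obtain ⟨x0, hx0V, hx0C⟩ := hUne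
  set S := Finset.univ.filter (fun i : Fin (n + 1) => (i : ℕ) < n - 1) with hS
  set T := Finset.univ.filter (fun l : Fin (n + 1) => n - 1 ≤ (l : ℕ)) with hT
  have hx0 : ∑ i ∈ S, (x0 i) ^ 2 = 1 := hx0C
  let r : (Fin (n + 1) → ℝ) → ℝ := fun y => Real.sqrt (∑ i ∈ S, (y i) ^ 2)
  let F : (Fin (n + 1) → ℝ) → (Fin (n + 1) → ℝ) :=
    fun y j => if (j : ℕ) < n - 1 then y j / r y else y j
  have hr0 : r x0 = 1 := by simp [r, hx0]
  have hrc : Continuous r := by fun_prop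
  have hF0 : F x0 = x0 := by
    funext j
    simp [F, hr0]
  have hFc : ContinuousAt F x0 := by
    refine continuousAt_pi.2 fun j => ?_
    by_cases hj : (j : ℕ) < n - 1
    · simp only [F, hj, if_true]
      exact (continuous_apply j).continuousAt.div hrc.continuousAt (by simp [hr0])
    · simp only [F, hj, if_false]
      exact (continuous_apply j).continuousAt
  have hG : ∀ᶠ y in nhds x0, ∑ i ∈ S, y i * ((∑ l ∈ T, a i l * y l) - b i) = 0 := by
    have h1 : ∀ᶠ y in nhds x0, F y ∈ V :=
      hFc.eventually (by rw [hF0]; exact hV.mem_nhds hx0V)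
    have h2 : ∀ᶠ y in nhds x0, 0 < r y :=
      hrc.continuousAt.eventually (by rw [hr0]; exact lt_mem_nhds one_pos)
    filter_upwards [h1, h2] with y hy1 hy2
    have hFS : ∀ i ∈ S, F y i = y i / r y := by
      intro i hi
      have : (i : ℕ) < n - 1 := by simpa [hS] using hi
      simp [F, this]
    have hFT : ∀ i ∈ T, F y i = y i := by
      intro i hi
      have : n - 1 ≤ (i : ℕ) := by simpa [hT] using hi
      simp only [F, not_lt.2 this, if_false]
    have hC : F y ∈ cylinderSet n := by
      change ∑ i ∈ S, (F y i) ^ 2 = 1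
      rw [Finset.sum_congr rfl (fun i hi => by rw [hFS i hi, div_pow]), ← Finset.sum_div]
      have : r y ^ 2 = ∑ i ∈ S, (y i) ^ 2 :=
        Real.sq_sqrt (Finset.sum_nonneg fun i _ => sq_nonneg _)
      rw [← this]
      exact div_self (by positivity)
    have h3 := heq (F y) ⟨hy1, hC⟩
    have h4 : ∑ i ∈ S, F y i * ((∑ l ∈ T, a i l * F y l) - b i)
        = (∑ i ∈ S, y i * ((∑ l ∈ T, a i l * y l) - b i)) / r y := by
      rw [Finset.sum_div]
      refine Finset.sum_congr rfl fun i hi => ?_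
      rw [hFS i hi, Finset.sum_congr rfl (fun l hl => by rw [hFT l hl])]
      ring
    rw [h4] at h3
    exact (div_eq_zero_iff.1 h3).resolve_right hy2.ne'
  have hL : ∀ i ∈ S, ∀ x : Fin (n + 1) → ℝ,
      (∀ᶠ y in nhds x, ∑ i ∈ S, y i * ((∑ l ∈ T, a i l * y l) - b i) = 0) →
      (∑ l ∈ T, a i l * x l) - b i = 0 := by
    intro i hi x hx
    have hx' := hx.self_of_nhds
    obtain ⟨s, hs, h⟩ := cyl_aux_exists hx (Pi.single i 1)
    have hinner : ∀ j, ∑ l ∈ T, a j l * (x + s • (Pi.single i 1 : Fin (n + 1) → ℝ)) l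
        = ∑ l ∈ T, a j l * x l := by
      intro j
      refine Finset.sum_congr rfl fun l hl => ?_
      have hne : l ≠ i := by
        rintro rfl
        simp [hS] at hi
        simp [hT] at hl
        omega
      simp [hne]
    simp only [hinner] at h
    simp only [Pi.add_apply, Pi.smul_apply, smul_eq_mul, add_mul, Finset.sum_add_distrib, hx',
      zero_add] at h
    rw [Finset.sum_eq_single i] at h
    · simpa [hs] using h
    · intro j _ hj
      simp [hj]
    · exact fun h => absurd hi h
  have hA : ∀ i ∈ S, ∀ l ∈ T, a i l = 0 := by
    intro i hi l hl
    have h1 := hL i hi x0 hG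
    have h2 : ∀ᶠ y in nhds x0, (∑ l ∈ T, a i l * y l) - b i = 0 :=
      (eventually_eventually_nhds.2 hG).mono fun y hy => hL i hi y hy
    obtain ⟨s, hs, h⟩ := cyl_aux_exists h2 (Pi.single l 1)
    simp only [Pi.add_apply, Pi.smul_apply, smul_eq_mul, mul_add, Finset.sum_add_distrib] at h
    have h3 : ∑ k ∈ T, a i k * (s * (Pi.single l 1 : Fin (n + 1) → ℝ) k) = 0 := by linarith
    rw [Finset.sum_eq_single l] at h3
    · simpa [hs] using h3
    · intro j _ hj
      simp [hj]
    · exact fun h => absurd hl h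
  refine ⟨fun i l hi hl => hA i (by simpa [hS] using hi) l (by simpa [hT] using hl),
    fun i hi => ?_⟩
  have hi' : i ∈ S := by simpa [hS] using hi
  have h1 := hL i hi' x0 hG
  rw [Finset.sum_eq_zero (fun l hl => by rw [hA i hi' l hl, zero_mul])] at h1
  linarith
end

section
/- Let n ≥ 4 and let S be a real orthogonal (n+1)×(n+1) matrix such that S_{ij} S_{lk} − S_{ik} S_{lj} = 0 for all indices 1 ≤ i, j, k ≤ n−1 and all l ∈ {n, n+1}. Then S_{lj} = 0 for every l ∈ {n, n+1} and every 1 ≤ j ≤ n−1; consequently S is block diagonal, preserving the direct sum decomposition ℝ^{n+1} = ℝ^{n−1} ⊕ ℝ² (an (n−1)×(n−1) orthogonal block and a 2×2 orthogonal block). -/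
open Matrix

/-- Let `n ≥ 4` and let `S` be a real orthogonal `(n+1)×(n+1)` matrix with
`S_{ij} S_{lk} − S_{ik} S_{lj} = 0` for all `1 ≤ i, j, k ≤ n−1` and `l ∈ {n, n+1}`.
Then `S_{lj} = 0` for all such `l, j`; consequently `S` is block diagonal with respect to
`ℝ^{n+1} = ℝ^{n−1} ⊕ ℝ²` (also `S_{jl} = 0` for `j ≤ n−1`, `l ∈ {n, n+1}`).  (In Lean,
`1`-based indices become the `0`-based indices of `Fin (n+1)`: `i ≤ n−1` becomes
`(i:ℕ) < n−1` and `l ∈ {n, n+1}` becomes `n−1 ≤ (l:ℕ)`.) -/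
theorem orthogonal_matrix_block_diagonal
    (n : ℕ) (hn : 4 ≤ n)
    (S : Matrix (Fin (n + 1)) (Fin (n + 1)) ℝ)
    (hS : S * Sᵀ = 1)
    (hrel : ∀ i j k l : Fin (n + 1),
      (i : ℕ) < n - 1 → (j : ℕ) < n - 1 → (k : ℕ) < n - 1 → n - 1 ≤ (l : ℕ) →
      S i j * S l k - S i k * S l j = 0) :
    (∀ l j : Fin (n + 1), n - 1 ≤ (l : ℕ) → (j : ℕ) < n - 1 → S l j = 0) ∧
    (∀ j l : Fin (n + 1), (j : ℕ) < n - 1 → n - 1 ≤ (l : ℕ) → S j l = 0) := by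
  have hU : IsUnit S := IsUnit.of_mul_eq_one _ hS
  have hLI : LinearIndependent ℝ S.row := Matrix.linearIndependent_rows_of_isUnit hU
  obtain ⟨m, rfl⟩ : ∃ m, n = m + 1 := ⟨n - 1, by omega⟩
  simp only [Nat.add_sub_cancel] at *
  have h1 : ∀ l j : Fin (m + 1 + 1), m ≤ (l : ℕ) → (j : ℕ) < m → S l j = 0 := by
    intro l j hl hj
    by_contra hne
    let r : Fin 4 → Fin (m + 1 + 1) := ![⟨0, by omega⟩, ⟨1, by omega⟩, ⟨2, by omega⟩, l]
    have hr : Function.Injective r := by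
      intro x y hxy
      have this : (r x : ℕ) = r y := congrArg Fin.val hxy
      have r0 : (r 0 : ℕ) = 0 := rfl
      have r1 : (r 1 : ℕ) = 1 := rfl
      have r2 : (r 2 : ℕ) = 2 := rfl
      have r3 : (r 3 : ℕ) = l := rfl
      clear_value r
      fin_cases x <;> fin_cases y <;>
        simp only [Fin.zero_eta, Fin.mk_one, Fin.reduceFinMk, r0, r1, r2, r3] at this ⊢ <;>
        omega
    have hLI4 := hLI.comp r hr
    have hrow : ∀ (x : Fin 4) (k : Fin (m + 1 + 1)), (k : ℕ) < m → S (r x) k * S l j = S (r x) j * S l k := by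
      intro x k hk
      by_cases hx : (r x : ℕ) < m
      · linarith [hrel (r x) j k l hx hj hk hl]
      · have : r x = l := by
          have r0 : (r 0 : ℕ) = 0 := rfl
          have r1 : (r 1 : ℕ) = 1 := rfl
          have r2 : (r 2 : ℕ) = 2 := rfl
          have r3 : r 3 = l := rfl
          clear_value r
          fin_cases x <;>
            simp only [Fin.zero_eta, Fin.mk_one, Fin.reduceFinMk, r0, r1, r2, r3] at hx ⊢ <;>
            omega
        rw [this, mul_comm]
    let q : Fin 3 → Fin (m + 1 + 1) := ![j, ⟨m, by omega⟩, ⟨m + 1, by omega⟩]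
    have hdep : ¬ LinearIndependent ℝ (fun x : Fin 4 => (fun y : Fin 3 => S (r x) (q y))) := by
      intro h
      have := h.fintype_card_le_finrank
      simp at this
    rw [Fintype.not_linearIndependent_iff] at hdep
    obtain ⟨g, hg, x0, hx0⟩ := hdep
    rw [Fintype.linearIndependent_iff] at hLI4
    refine hx0 (hLI4 g ?_ x0)
    have hq : ∀ y, ∑ x, g x * S (r x) (q y) = 0 := by
      intro y
      simpa using congrFun hg y
    ext k
    simp only [Finset.sum_apply, Pi.smul_apply, Function.comp, Matrix.row, smul_eq_mul,
      Pi.zero_apply]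
    rcases lt_or_ge (k : ℕ) m with hk | hk
    · refine (mul_eq_zero.mp ?_).resolve_right hne
      rw [Finset.sum_mul]
      have : ∀ x, g x * S (r x) k * S l j = g x * S (r x) j * S l k := by
        intro x
        rw [mul_assoc, hrow x k hk, mul_assoc]
      simp only [this]
      rw [← Finset.sum_mul]
      have := hq 0
      simp only [q, Matrix.cons_val_zero] at this
      rw [this, zero_mul]
    · rcases Nat.lt_or_ge m k with hk2 | hk2
      · have : k = q 2 := by ext; simp [q]; omega
        rw [this]; exact hq 2
      · have : k = q 1 := by ext; simp [q]; omega
        rw [this]; exact hq 1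
  refine ⟨h1, ?_⟩
  let p : Fin (m + 1 + 1) := (Fin.last m).castSucc
  let q : Fin (m + 1 + 1) := Fin.last (m + 1)
  have key : ∀ i l : Fin (m + 1 + 1), m ≤ (l : ℕ) →
      S i p * S l p + S i q * S l q = (1 : Matrix _ _ ℝ) i l := by
    intro i l hl
    rw [← hS, Matrix.mul_apply, Fin.sum_univ_castSucc, Fin.sum_univ_castSucc,
      Finset.sum_eq_zero]
    · simp [p, q]
    · intro x _
      rw [Matrix.transpose_apply, h1 l _ hl (by simp), mul_zero]
  have hp : m ≤ (p : ℕ) := by simp [p]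
  have hq : m ≤ (q : ℕ) := by simp [q]
  have hpq : p ≠ q := by simp [p, q, Fin.ext_iff]
  have e1 := key p p hp
  have e2 := key q q hq
  have e3 := key p q hq
  rw [Matrix.one_apply_eq] at e1 e2
  rw [Matrix.one_apply_ne hpq] at e3
  intro j l hj hl
  have f1 := key j p hp
  have f2 := key j q hq
  rw [Matrix.one_apply_ne (by intro h; rw [h] at hj; omega)] at f1 f2
  have hdet : (S p p * S q q - S p q * S q p) ^ 2 = 1 := by
    linear_combination (S q p * S q p + S q q * S q q) * e1 + e2 - (S p p * S q p + S p q * S q q) * e3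
  have hd : S p p * S q q - S p q * S q p ≠ 0 := by
    intro h; rw [h] at hdet; norm_num at hdet
  have z1 : S j p = 0 := by
    refine (mul_eq_zero.mp ?_).resolve_right hd
    linear_combination S q q * f1 - S p q * f2
  have z2 : S j q = 0 := by
    refine (mul_eq_zero.mp ?_).resolve_right hd
    linear_combination S p p * f2 - S q p * f1
  rcases Nat.lt_or_ge m l with hk2 | hk2
  · have : l = q := by ext; simp [q]; omega
    rw [this]; exact z2
  · have : l = p := by ext; simp [p]; omega
    rw [this]; exact z1
end

section
/- Let n ≥ 4, let {J_α : 1 ≤ α ≤ (n−1)(n−2)/2} be an orthonormal basis of so(n−1), let S be a real orthogonal (n+1)×(n+1) matrix (so S⁻¹ = Sᵀ), let q ∈ ℝ^{n+1}, and define the rotation vector fields K_α(x) = S J_α S⁻¹ (x − q) on ℝ^{n+1}. If there is a nonempty relatively open subset U of the cylinder C such that ⟨K_α(x), ν(x)⟩ = 0 for every x ∈ U and every α, then for every α the matrix S J_α S⁻¹ belongs to so(n−1) (its entries vanish outside the top-left (n−1)×(n−1) block) and S J_α S⁻¹ q = 0; in particular K_α(x) = (S J_α S⁻¹) x for all x ∈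 ℝ^{n+1}, and the matrices {S J_α S⁻¹ : 1 ≤ α ≤ (n−1)(n−2)/2} form an orthonormal basis of so(n−1). -/
open Matrix

/-- Membership in `so(n−1) ⊂ so(n+1)`: skew-symmetric real `(n+1)×(n+1)` matrices whose
entries vanish outside the top-left `(n−1)×(n−1)` block. -/
def memSOnm1 (n : ℕ) (A : Matrix (Fin (n + 1)) (Fin (n + 1)) ℝ) : Prop :=
  Aᵀ = -A ∧ ∀ i j : Fin (n + 1), (n - 1 ≤ (i : ℕ) ∨ n - 1 ≤ (j : ℕ)) → A i j = 0

theorem cyl_lem1 {ι : Type*} [Fintype ι] [DecidableEq ι] (s : Finset ι) (V : Set (ι → ℝ))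
    (hV : IsOpen V) (x : ι → ℝ) (hx : x ∈ V) (hx1 : ∑ i ∈ s, (x i) ^ 2 = 1) (w : ι → ℝ)
    (h : ∀ y ∈ V, ∑ i ∈ s, (y i) ^ 2 = 1 → (∀ i, i ∉ s → y i = x i) →
      ∑ i ∈ s, w i * y i = 0) : ∀ i ∈ s, w i = 0 := by
  have key : ∀ i ∈ s, ∀ j ∈ s, w i * x j = w j * x i := by
    intro i hi j hj
    by_cases hij : i = j
    · subst hij; rfl
    let y : ℝ → ι → ℝ := fun t k => if k = i then Real.cos t * x i - Real.sin t * x j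
      else if k = j then Real.sin t * x i + Real.cos t * x j else x k
    have hji : j ∈ s.erase i := Finset.mem_erase.2 ⟨fun e => hij e.symm, hj⟩
    have hyc : Continuous y := by
      refine continuous_pi fun k => ?_
      simp only [y]
      split_ifs <;> fun_prop
    have hy0 : y 0 = x := by
      funext k
      simp only [y]
      split_ifs with h1 h2 <;> simp_all
    have split : ∀ f : ι → ℝ → ℝ, ∀ t, ∑ k ∈ s, f k (y t k) =
        f i (Real.cos t * x i - Real.sin t * x j) + (f j (Real.sin t * x i + Real.cos t * x j)
          + ∑ k ∈ (s.erase i).erase j, f k (x k)) := by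
      intro f t
      rw [← Finset.add_sum_erase s _ hi, ← Finset.add_sum_erase (s.erase i) _ hji]
      congr 1
      · simp [y]
      congr 1
      · have : j ≠ i := fun e => hij e.symm
        simp [y, this]
      · refine Finset.sum_congr rfl fun k hk => ?_
        simp only [Finset.mem_erase] at hk
        simp [y, hk.1, hk.2.1]
    have split0 : ∀ f : ι → ℝ → ℝ, ∑ k ∈ s, f k (x k) =
        f i (x i) + (f j (x j) + ∑ k ∈ (s.erase i).erase j, f k (x k)) := by
      intro f
      rw [← Finset.add_sum_erase s _ hi, ← Finset.add_sum_erase (s.erase i) _ hji]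
    have hz : ∀ t, y t ∈ V → ∑ k ∈ s, w k * y t k = 0 := by
      intro t ht
      refine h _ ht ?_ ?_
      · rw [split (fun _ r => r ^ 2), ← hx1, split0 (fun _ r => r ^ 2)]
        have := Real.sin_sq_add_cos_sq t
        linear_combination (x i ^ 2 + x j ^ 2) * this
      · intro k hk
        have h1 : k ≠ i := fun e => hk (e ▸ hi)
        have h2 : k ≠ j := fun e => hk (e ▸ hj)
        simp [y, h1, h2]
    have hev : ∀ᶠ t in nhds (0 : ℝ), y t ∈ V :=
      hyc.continuousAt.eventually (hV.mem_nhds (by rw [hy0]; exact hx))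
    obtain ⟨ε, hε, hb⟩ := Metric.eventually_nhds_iff.1 hev
    let t := min (ε / 2) 1
    have ht0 : 0 < t := lt_min (by linarith) one_pos
    have ht1 : t ≤ 1 := min_le_right _ _
    have ht2 : t < ε := lt_of_le_of_lt (min_le_left _ _) (by linarith)
    have a1 := hz t (hb (by rw [Real.dist_eq, sub_zero, abs_of_pos ht0]; exact ht2))
    have a2 := hz (-t) (hb (by rw [Real.dist_eq, sub_zero, abs_neg, abs_of_pos ht0]; exact ht2))
    rw [split (fun k r => w k * r)] at a1 a2
    rw [Real.cos_neg, Real.sin_neg] at a2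
    have hs : 0 < Real.sin t := Real.sin_pos_of_pos_of_le_one ht0 ht1
    have : Real.sin t * (w i * x j - w j * x i) = 0 := by linear_combination (a2 - a1) / 2
    rcases mul_eq_zero.1 this with h0 | h0
    · exact absurd h0 hs.ne'
    · linarith
  intro i hi
  have h0 := h x hx hx1 (fun _ _ => rfl)
  calc w i = w i * ∑ j ∈ s, (x j) ^ 2 := by rw [hx1, mul_one]
    _ = x i * ∑ j ∈ s, w j * x j := by
      rw [Finset.mul_sum, Finset.mul_sum]
      refine Finset.sum_congr rfl fun j hj => ?_
      linear_combination x j * key i hi j hj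
    _ = 0 := by rw [h0, mul_zero]

theorem cyl_skew {ι : Type*} [Fintype ι] (A : Matrix ι ι ℝ) (hA : Aᵀ = -A) (v : ι → ℝ) :
    v ⬝ᵥ A *ᵥ v = 0 := by
  have h1 : v ⬝ᵥ A *ᵥ v = (Aᵀ *ᵥ v) ⬝ᵥ v := by
    rw [Matrix.dotProduct_mulVec, Matrix.mulVec_transpose]
  rw [hA, Matrix.neg_mulVec, neg_dotProduct, dotProduct_comm] at h1
  rw [dotProduct_comm]
  rw [dotProduct_comm] at h1
  rw [dotProduct_comm] at h1
  linarith

theorem cyl_lem2 {ι : Type*} [Fintype ι] [DecidableEq ι] (s : Finset ι) (V : Set (ι → ℝ))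
    (hV : IsOpen V) (x : ι → ℝ) (hx : x ∈ V) (hx1 : ∑ i ∈ s, (x i) ^ 2 = 1)
    (A : Matrix ι ι ℝ) (hA : Aᵀ = -A) (q : ι → ℝ)
    (h : ∀ y ∈ V, ∑ i ∈ s, (y i) ^ 2 = 1 → ∑ i ∈ s, (A *ᵥ (y - q)) i * y i = 0) :
    (∀ i ∈ s, ∀ k, k ∉ s → A i k = 0) ∧ ∀ i ∈ s, (A *ᵥ q) i = 0 := by
  let z : (ι → ℝ) → ι → ℝ := fun x k => if k ∈ s then 0 else x k
  have main : ∀ x ∈ V, ∑ i ∈ s, (x i) ^ 2 = 1 → ∀ i ∈ s, (A *ᵥ (z x - q)) i = 0 := by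
    intro x hx hx1
    refine cyl_lem1 s V hV x hx hx1 _ ?_
    intro y hy hy1 hyx
    have e := h y hy hy1
    let p : ι → ℝ := fun k => if k ∈ s then y k else 0
    have hyq : y - q = (z x - q) + p := by
      funext k
      by_cases hk : k ∈ s
      · simp [z, p, hk]; ring
      · simp [z, p, hk, hyx k hk]
    have hp : ∑ i ∈ s, (A *ᵥ p) i * y i = 0 := by
      rw [← cyl_skew A hA p]
      simp only [dotProduct, p, ite_mul, zero_mul, Finset.sum_ite_mem, Finset.univ_inter]
      exact Finset.sum_congr rfl fun k _ => mul_comm _ _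
    rw [hyq, Matrix.mulVec_add] at e
    simp only [Pi.add_apply, add_mul, Finset.sum_add_distrib, hp, add_zero] at e
    exact e
  have hAik : ∀ i ∈ s, ∀ k, k ∉ s → A i k = 0 := by
    intro i hi k hk
    have hc : Continuous (fun t : ℝ => x + t • (Pi.single k 1 : ι → ℝ)) := by fun_prop
    have hev : ∀ᶠ t in nhds (0 : ℝ), x + t • (Pi.single k 1 : ι → ℝ) ∈ V :=
      hc.continuousAt.eventually (hV.mem_nhds (by simpa using hx))
    obtain ⟨ε, hε, hb⟩ := Metric.eventually_nhds_iff.1 hev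
    have hm := hb (y := ε / 2) (by rw [Real.dist_eq, sub_zero, abs_of_pos (by linarith)]; linarith)
    have h1 := main _ hm (by
      rw [← hx1]
      refine Finset.sum_congr rfl fun j hj => ?_
      have : j ≠ k := fun e => hk (e ▸ hj)
      simp [this]) i hi
    have h2 := main x hx hx1 i hi
    have : z (x + (ε / 2) • (Pi.single k 1 : ι → ℝ)) - q
        = (z x - q) + (ε / 2) • (Pi.single k 1 : ι → ℝ) := by
      funext j
      by_cases hj : j ∈ s
      · have : j ≠ k := fun e => hk (e ▸ hj)
        simp [z, hj, this]
      · simp [z, hj]; ring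
    rw [this, Matrix.mulVec_add, Pi.add_apply, h2, Matrix.mulVec_smul] at h1
    simp at h1
    rcases h1 with h1 | h1
    · linarith
    · exact h1
  refine ⟨hAik, fun i hi => ?_⟩
  have h2 := main x hx hx1 i hi
  have hz : (A *ᵥ z x) i = 0 := by
    simp only [Matrix.mulVec, dotProduct, z]
    refine Finset.sum_eq_zero fun k _ => ?_
    by_cases hk : k ∈ s
    · simp [hk]
    · simp [hAik i hi k hk]
  rw [Matrix.mulVec_sub, Pi.sub_apply, hz] at h2
  linarith

theorem cyl_conj_skew {ι : Type*} [Fintype ι] (S B : Matrix ι ι ℝ) (hB : Bᵀ = -B) :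
    (S * B * Sᵀ)ᵀ = -(S * B * Sᵀ) := by
  simp [Matrix.transpose_mul, hB, Matrix.mul_assoc]

theorem cyl_single (n : ℕ) (i j : Fin (n + 1)) (hi : (i : ℕ) < n - 1) (hj : (j : ℕ) < n - 1) :
    memSOnm1 n (Matrix.single i j 1 - Matrix.single j i 1) := by
  refine ⟨by simp, ?_⟩
  intro a b hab
  have h1 : ¬ (i = a ∧ j = b) := by rintro ⟨rfl, rfl⟩; omega
  have h2 : ¬ (j = a ∧ i = b) := by rintro ⟨rfl, rfl⟩; omega
  simp [Matrix.single_apply, h1, h2]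

theorem cyl_block (n : ℕ) (hn : 4 ≤ n) (S : Matrix (Fin (n + 1)) (Fin (n + 1)) ℝ)
    (hS : Sᵀ * S = 1)
    (hoff : ∀ B, memSOnm1 n B → ∀ i k : Fin (n + 1), (i : ℕ) < n - 1 → n - 1 ≤ (k : ℕ) →
      (S * B * Sᵀ) i k = 0) (B : Matrix (Fin (n + 1)) (Fin (n + 1)) ℝ) (hB : memSOnm1 n B) :
    memSOnm1 n (S * B * Sᵀ) := by
  have hsk := fun (B : Matrix (Fin (n + 1)) (Fin (n + 1)) ℝ) (hB : memSOnm1 n B) (i j) =>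
    congrFun (congrFun (cyl_conj_skew S B hB.1) i) j
  simp only [Matrix.transpose_apply, Matrix.neg_apply] at hsk
  have hprod : ∀ B C, memSOnm1 n B → memSOnm1 n C → ∀ a b : Fin (n + 1), a ≠ b →
      n - 1 ≤ (a : ℕ) → n - 1 ≤ (b : ℕ) → (S * (B * C) * Sᵀ) a b = 0 := by
    intro B C hB hC a b hab ha hb
    have e : S * (B * C) * Sᵀ = (S * B * Sᵀ) * (S * C * Sᵀ) := by
      calc S * (B * C) * Sᵀ = S * B * 1 * C * Sᵀ := by simp only [Matrix.mul_assoc, Matrix.one_mul]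
        _ = _ := by rw [← hS]; simp only [Matrix.mul_assoc]
    rw [e, Matrix.mul_apply]
    refine Finset.sum_eq_zero fun k _ => ?_
    by_cases hk : (k : ℕ) < n - 1
    · rw [hoff C hC k b hk hb, mul_zero]
    · have : k = a ∨ k = b := by
        have : (a : ℕ) ≠ b := fun e => hab (Fin.ext e)
        have := a.2; have := b.2; have := k.2
        rw [Fin.ext_iff, Fin.ext_iff]; omega
      rcases this with rfl | rfl
      · have := hsk B hB k k
        have h0 : (S * B * Sᵀ) k k = 0 := by linarith
        rw [h0, zero_mul]
      · have := hsk C hC k k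
        have h0 : (S * C * Sᵀ) k k = 0 := by linarith
        rw [h0, mul_zero]
  have hSS : ∀ i j a b : Fin (n + 1), i ≠ j → (i : ℕ) < n - 1 → (j : ℕ) < n - 1 → a ≠ b →
      n - 1 ≤ (a : ℕ) → n - 1 ≤ (b : ℕ) → S a i * S b j = 0 := by
    intro i j a b hij hi hj hab ha hb
    obtain ⟨k, hk, hki, hkj⟩ : ∃ k : Fin (n + 1), (k : ℕ) < n - 1 ∧ k ≠ i ∧ k ≠ j := by
      have : ∃ m : ℕ, m < 3 ∧ m ≠ i ∧ m ≠ j := by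
        by_cases h0 : (0 : ℕ) ≠ i ∧ (0 : ℕ) ≠ j
        · exact ⟨0, by omega, h0⟩
        by_cases h1 : (1 : ℕ) ≠ i ∧ (1 : ℕ) ≠ j
        · exact ⟨1, by omega, h1⟩
        exact ⟨2, by omega, by omega, by omega⟩
      obtain ⟨m, hm, h1, h2⟩ := this
      refine ⟨⟨m, by omega⟩, by simp only; omega, ?_, ?_⟩
      · intro e; exact h1 (congrArg Fin.val e)
      · intro e; exact h2 (congrArg Fin.val e)
    have h := hprod _ _ (cyl_single n i k hi hk) (cyl_single n k j hk hj) a b hab ha hb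
    have e : ((Matrix.single i k 1 - Matrix.single k i 1) *
        (Matrix.single k j 1 - Matrix.single j k 1) : Matrix (Fin (n + 1)) (Fin (n + 1)) ℝ)
        = Matrix.single i j 1 := by
      simp [sub_mul, mul_sub, Matrix.single_mul_single_of_ne, hki, hkj, hij, hki.symm]
    rw [e, Matrix.mul_assoc, Matrix.mul_apply] at h
    rw [Finset.sum_eq_single i] at h
    · simpa using h
    · intro l _ hl
      rw [Matrix.single_mul_apply_of_ne _ _ _ _ _ hl, mul_zero]
    · simp
  refine ⟨cyl_conj_skew S B hB.1, ?_⟩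
  intro a b hab
  by_cases ha : (a : ℕ) < n - 1
  · exact hoff B hB a b ha (by omega)
  by_cases hb : (b : ℕ) < n - 1
  · have := hsk B hB a b
    rw [hoff B hB b a hb (by omega)] at this
    linarith
  by_cases h : a = b
  · subst h
    have := hsk B hB a a
    linarith
  rw [Matrix.mul_apply]
  refine Finset.sum_eq_zero fun j _ => ?_
  rw [Matrix.mul_apply, Finset.sum_mul]
  refine Finset.sum_eq_zero fun i _ => ?_
  rw [Matrix.transpose_apply]
  by_cases hij : i = j
  · subst hij
    have := congrFun (congrFun hB.1 i) i
    simp only [Matrix.transpose_apply, Matrix.neg_apply] at this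
    have h0 : B i i = 0 := by linarith
    rw [h0]; ring
  by_cases hi : (i : ℕ) < n - 1
  · by_cases hj : (j : ℕ) < n - 1
    · have := hSS i j a b hij hi hj h (by omega) (by omega)
      linear_combination B i j * this
    · rw [hB.2 i j (by omega)]; ring
  · rw [hB.2 i j (by omega)]; ring

theorem cyl_surj (n : ℕ) (S : Matrix (Fin (n + 1)) (Fin (n + 1)) ℝ)
    (hS : Sᵀ * S = 1) (hmem : ∀ B, memSOnm1 n B → memSOnm1 n (S * B * Sᵀ))
    (B : Matrix (Fin (n + 1)) (Fin (n + 1)) ℝ) (hB : memSOnm1 n B) :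
    ∃ C, memSOnm1 n C ∧ S * C * Sᵀ = B := by
  let W : Submodule ℝ (Matrix (Fin (n + 1)) (Fin (n + 1)) ℝ) :=
    { carrier := {A | memSOnm1 n A}
      add_mem' := by
        rintro A B ⟨h1, h2⟩ ⟨h3, h4⟩
        refine ⟨by rw [Matrix.transpose_add, h1, h3]; abel, fun i j h => ?_⟩
        rw [Matrix.add_apply, h2 i j h, h4 i j h, add_zero]
      zero_mem' := ⟨by simp, fun i j _ => rfl⟩
      smul_mem' := by
        rintro c A ⟨h1, h2⟩
        refine ⟨by rw [Matrix.transpose_smul, h1, smul_neg], fun i j h => ?_⟩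
        rw [Matrix.smul_apply, h2 i j h, smul_zero] }
  let f : W →ₗ[ℝ] W :=
    { toFun := fun A => ⟨S * A.1 * Sᵀ, hmem A.1 A.2⟩
      map_add' := by
        intro A B
        apply Subtype.ext
        simp [mul_add, add_mul]
      map_smul' := by
        intro c A
        apply Subtype.ext
        simp }
  have hinj : Function.Injective f := by
    intro A B hAB
    have h : S * A.1 * Sᵀ = S * B.1 * Sᵀ := congrArg Subtype.val hAB
    apply Subtype.ext
    have e : ∀ C : Matrix (Fin (n + 1)) (Fin (n + 1)) ℝ, Sᵀ * (S * C * Sᵀ) * S = C := by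
      intro C
      calc Sᵀ * (S * C * Sᵀ) * S = (Sᵀ * S) * C * (Sᵀ * S) := by simp only [Matrix.mul_assoc]
        _ = C := by rw [hS]; simp
    rw [← e A.1, h, e]
  obtain ⟨C, hC⟩ := (LinearMap.injective_iff_surjective.1 hinj) ⟨B, hB⟩
  exact ⟨C.1, C.2, congrArg Subtype.val hC⟩

/-- Let `n ≥ 4`, `{J_α}` an orthonormal basis of `so(n−1)` (each `J_α` lies in
`so(n−1)`, `Tr(J_α J_βᵀ) = δ_{αβ}`, and they span `so(n−1)`), `S` orthogonal, `q ∈ ℝ^{n+1}`,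
and `K_α(x) = S J_α S⁻¹ (x − q)`.  If `⟨K_α(x), ν(x)⟩ = 0` for every `x` in some nonempty
relatively open subset `U` of the cylinder (where `ν(x) = (x₁,…,x_{n−1},0,0)`), then each
`S J_α S⁻¹ ∈ so(n−1)`, `S J_α S⁻¹ q = 0`, hence `K_α(x) = (S J_α S⁻¹) x`, and the matrices
`{S J_α S⁻¹}` form an orthonormal basis of `so(n−1)`. -/
theorem cylinder_rotation_vector_fields_normalize
    (n : ℕ) (hn : 4 ≤ n)
    (J : Fin ((n - 1) * (n - 2) / 2) → Matrix (Fin (n + 1)) (Fin (n + 1)) ℝ)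
    (hJmem : ∀ α, memSOnm1 n (J α))
    (hJorth : ∀ α β, Matrix.trace (J α * (J β)ᵀ) = if α = β then 1 else 0)
    (hJspan : ∀ B, memSOnm1 n B →
      ∃ c : Fin ((n - 1) * (n - 2) / 2) → ℝ, B = ∑ α, c α • J α)
    (S : Matrix (Fin (n + 1)) (Fin (n + 1)) ℝ) (hS : S * Sᵀ = 1)
    (q : Fin (n + 1) → ℝ)
    (K : Fin ((n - 1) * (n - 2) / 2) → (Fin (n + 1) → ℝ) → Fin (n + 1) → ℝ)
    (hK : ∀ α x, K α x = (S * J α * Sᵀ).mulVec (x - q))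
    (U : Set (Fin (n + 1) → ℝ))
    (hUsub : U ⊆ cylinderSet n)
    (hUrelOpen : ∃ V : Set (Fin (n + 1) → ℝ), IsOpen V ∧ U = V ∩ cylinderSet n)
    (hUne : U.Nonempty)
    (hnormal : ∀ x ∈ U, ∀ α,
      ∑ i ∈ Finset.univ.filter (fun i : Fin (n + 1) => (i : ℕ) < n - 1),
        K α x i * x i = 0) :
    (∀ α, memSOnm1 n (S * J α * Sᵀ)) ∧
    (∀ α, (S * J α * Sᵀ).mulVec q = 0) ∧
    (∀ α x, K α x = (S * J α * Sᵀ).mulVec x) ∧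
    (∀ α β, Matrix.trace ((S * J α * Sᵀ) * (S * J β * Sᵀ)ᵀ) = if α = β then 1 else 0) ∧
    (∀ B, memSOnm1 n B →
      ∃ c : Fin ((n - 1) * (n - 2) / 2) → ℝ, B = ∑ α, c α • (S * J α * Sᵀ)) := by
  have hS2 : Sᵀ * S = 1 := mul_eq_one_comm.1 hS
  obtain ⟨V, hV, rfl⟩ := hUrelOpen
  obtain ⟨x, hxV, hxC⟩ := hUne
  have hsum : ∀ c : Fin ((n - 1) * (n - 2) / 2) → ℝ,
      S * (∑ α, c α • J α) * Sᵀ = ∑ α, c α • (S * J α * Sᵀ) := by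
    intro c
    simp [Finset.mul_sum, Finset.sum_mul]
  have h2 := fun α => cyl_lem2
    (Finset.univ.filter (fun i : Fin (n + 1) => (i : ℕ) < n - 1)) V hV x hxV hxC
    (S * J α * Sᵀ) (cyl_conj_skew S (J α) (hJmem α).1) q (by
      intro y hy hy1
      have := hnormal y ⟨hy, hy1⟩ α
      rw [hK] at this
      exact this)
  have hmem : ∀ B, memSOnm1 n B → memSOnm1 n (S * B * Sᵀ) := by
    refine cyl_block n hn S hS2 ?_
    intro B hB i k hi hk
    obtain ⟨c, rfl⟩ := hJspan B hB
    rw [hsum, Matrix.sum_apply]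
    refine Finset.sum_eq_zero fun α _ => ?_
    rw [Matrix.smul_apply, (h2 α).1 i (by simpa using hi) k (by simpa using hk), smul_zero]
  have hq : ∀ α, (S * J α * Sᵀ).mulVec q = 0 := by
    intro α
    funext i
    by_cases hi : (i : ℕ) < n - 1
    · exact (h2 α).2 i (by simpa using hi)
    · simp only [Matrix.mulVec, dotProduct, Pi.zero_apply]
      refine Finset.sum_eq_zero fun k _ => ?_
      rw [(hmem _ (hJmem α)).2 i k (by omega), zero_mul]
  refine ⟨fun α => hmem _ (hJmem α), hq, ?_, ?_, ?_⟩
  · intro α y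
    rw [hK, Matrix.mulVec_sub, hq, sub_zero]
  · intro α β
    rw [← hJorth α β]
    have e : (S * J α * Sᵀ) * (S * J β * Sᵀ)ᵀ = S * (J α * (J β)ᵀ * Sᵀ) := by
      calc (S * J α * Sᵀ) * (S * J β * Sᵀ)ᵀ = S * J α * (Sᵀ * S) * (J β)ᵀ * Sᵀ := by
            simp only [Matrix.transpose_mul, Matrix.transpose_transpose, Matrix.mul_assoc]
        _ = _ := by rw [hS2]; simp only [Matrix.mul_assoc, Matrix.one_mul]
    rw [e, Matrix.trace_mul_comm, Matrix.mul_assoc, hS2, Matrix.mul_one]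
  · intro B hB
    obtain ⟨C, hC, rfl⟩ := cyl_surj n S hS2 hmem B hB
    obtain ⟨c, rfl⟩ := hJspan C hC
    exact ⟨c, hsum c⟩
end

section
/- Let n ≥ 4, let {J_α : 1 ≤ α ≤ (n−1)(n−2)/2} be an orthonormal basis of so(n−1), let S be a real orthogonal (n+1)×(n+1) matrix (so S⁻¹ = Sᵀ), let q ∈ ℝ^{n+1}, and define the rotation vector fields K_α(x) = S J_α S⁻¹ (x − q) on ℝ^{n+1}. If there is a nonempty relatively open subset U of M consisting of points with x̄ ≠ 0 such that ⟨K_α(x), ν(x)⟩ = 0 for every x ∈ U and every α, then for every α the matrix S J_α S⁻¹ belongs to so(n−1) (its entries vanish outside the top-left (n−1)×(n−1) block) and S J_α S⁻¹ q = 0; in particular K_α(x) = (S J_α S⁻¹) x for all x ∈ ℝ^{n+1}, and the matrices {S J_α S⁻¹ : 1 ≤ α ≤ (n−1)(n−2)/2} form an orthonormal basis of so(n−1). -/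
open Matrix

/-- `|x̄|`, the norm of the first `n−1` coordinates of `x ∈ ℝ^{n+1}`. -/
noncomputable def rbar (n : ℕ) (x : Fin (n + 1) → ℝ) : ℝ :=
  Real.sqrt (∑ i ∈ Finset.univ.filter (fun i : Fin (n + 1) => (i : ℕ) < n - 1), (x i) ^ 2)

/-- The hypersurface `Bowl^{n−1} × ℝ = {(x̄, u(|x̄|), x_{n+1})} ⊂ ℝ^{n+1}`, i.e. the graph
condition that the `n`-th coordinate (index `n−1` in `0`-based `Fin (n+1)`) equals
`u(|x̄|)`. -/
def bowlTimesR (n : ℕ) (u : ℝ → ℝ) : Set (Fin (n + 1) → ℝ) :=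
  {x | x ⟨n - 1, by omega⟩ = u (rbar n x)}

lemma ode_aux (n : ℕ) (u u1 u2 : ℝ → ℝ) (hd1 : ∀ r > 0, HasDerivAt u (u1 r) r)
    (hd2 : ∀ r > 0, HasDerivAt u1 (u2 r) r)
    (hODE : ∀ r > (0:ℝ), u2 r / (1 + (u1 r) ^ 2) + (n - 1 : ℝ) * u1 r / r = 1)
    (r0 : ℝ) (hr0 : 0 < r0) (a b c : ℝ)
    (h : ∀ᶠ r in nhds r0, u1 r * c = 0 ∧ u1 r * (u r * a + b) + r * a = 0) :
    a = 0 ∧ b = 0 ∧ c = 0 := by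
  have hnz : ¬ ∀ᶠ r in nhds r0, u1 r = 0 := by
    intro h0
    have h1 : u2 r0 = 0 := by
      have : HasDerivAt u1 0 r0 :=
        (hasDerivAt_const r0 (0:ℝ)).congr_of_eventuallyEq h0
      exact (hd2 r0 hr0).unique this
    have h2 := h0.self_of_nhds
    have := hODE r0 hr0
    rw [h1, h2] at this
    simp at this
  have hc : c = 0 := by
    by_contra hc
    exact hnz (h.mono fun r hr => by simpa [hc] using hr.1)
  have ha : a = 0 := by
    by_contra ha
    have hpos : ∀ᶠ r in nhds r0, 0 < r := lt_mem_nhds hr0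
    have e1 : ∀ᶠ r in nhds r0, u1 r * (u r + b / a) + r = 0 := by
      filter_upwards [h] with r hr
      have := hr.2
      field_simp
      linarith
    have e2 : ∀ᶠ r in nhds r0, u r = - b / a - n := by
      filter_upwards [e1.eventually_nhds, hpos] with r hr hrp
      have hd : HasDerivAt (fun r => u1 r * (u r + b / a) + r)
          (u2 r * (u r + b / a) + u1 r * u1 r + 1) r :=
        ((hd2 r hrp).mul ((hd1 r hrp).add_const (b / a))).add (hasDerivAt_id r)
      have hd0 : HasDerivAt (fun r => u1 r * (u r + b / a) + r) 0 r :=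
        (hasDerivAt_const r (0:ℝ)).congr_of_eventuallyEq hr
      have e := hd.unique hd0
      have e' := hr.self_of_nhds
      have o := hODE r hrp
      have hp : 0 < 1 + u1 r ^ 2 := by positivity
      have k1 : u2 r / (1 + u1 r ^ 2) * (u r + b / a) = -1 := by
        rw [div_mul_eq_mul_div, div_eq_iff hp.ne']
        linarith
      have k2 : (n - 1 : ℝ) * u1 r / r * (u r + b / a) = -(n-1) := by
        rw [div_mul_eq_mul_div, div_eq_iff hrp.ne']
        linear_combination (n - 1 : ℝ) * e'
      have : u r + b / a = -n := by
        linear_combination (-(u r + b/a)) * o + k1 + k2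
      rw [neg_div]
      linarith
    have hd0 : HasDerivAt u 0 r0 :=
        (hasDerivAt_const r0 (- b / a - n : ℝ)).congr_of_eventuallyEq e2
    have := (hd1 r0 hr0).unique hd0
    have h3 := e1.self_of_nhds
    rw [this] at h3
    linarith
  refine ⟨ha, ?_, hc⟩
  by_contra hb
  exact hnz (h.mono fun r hr => by simpa [ha, hb] using hr.2)

lemma rot_aux (C D E : ℝ)
    (h : ∀ᶠ t in nhds (0:ℝ), C * Real.cos t + D * Real.sin t + E = 0) :
    C = 0 ∧ D = 0 ∧ E = 0 := by
  have h0 := h.self_of_nhds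
  have hneg : ∀ᶠ t in nhds (0:ℝ), C * Real.cos (-t) + D * Real.sin (-t) + E = 0 := by
    have : Filter.Tendsto (fun t : ℝ => -t) (nhds 0) (nhds 0) := by
      simpa using (continuous_neg (G := ℝ)).tendsto 0
    exact this.eventually h
  have hlt : ∀ᶠ t in nhds (0:ℝ), t < 1 := gt_mem_nhds one_pos
  have hall := ((h.and (hneg.and hlt)).filter_mono nhdsWithin_le_nhds).and
    (self_mem_nhdsWithin : Set.Ioi (0:ℝ) ∈ nhdsWithin 0 (Set.Ioi 0))
  obtain ⟨t, ⟨h1, h2, ht1⟩, ht0⟩ := hall.exists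
  have ht0 : 0 < t := ht0
  have hpi : t < Real.pi := by linarith [Real.pi_gt_three]
  have hs := Real.sin_pos_of_pos_of_lt_pi ht0 hpi
  simp only [Real.cos_neg, Real.sin_neg, Real.cos_zero, Real.sin_zero] at *
  have hD : D = 0 := by
    have : D * Real.sin t = 0 := by linarith
    exact (mul_eq_zero.1 this).resolve_right hs.ne'
  have hC : C = 0 := by
    have : C * (Real.cos t - 1) = 0 := by subst hD; linarith
    refine (mul_eq_zero.1 this).resolve_right ?_
    intro hh
    nlinarith [Real.sin_sq_add_cos_sq t]
  refine ⟨hC, hD, ?_⟩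
  subst hC hD; linarith

lemma rbar_single_mul (n : ℕ) (X : Fin (n+1) → ℝ) (Y : Fin (n+1) → ℝ)
    (h : ∀ i : Fin (n+1), (i : ℕ) < n - 1 → X i = Y i) : rbar n X = rbar n Y := by
  unfold rbar
  congr 1
  refine Finset.sum_congr rfl fun i hi => ?_
  rw [h i (Finset.mem_filter.1 hi).2]

lemma rbar_cont (n : ℕ) : Continuous (rbar n) := by
  unfold rbar
  fun_prop

lemma rbar_smul (n : ℕ) (s : ℝ) (hs : 0 ≤ s) (X : Fin (n+1) → ℝ) :
    rbar n (s • X) = s * rbar n X := by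
  unfold rbar
  simp only [Pi.smul_apply, smul_eq_mul, mul_pow, ← Finset.mul_sum]
  rw [Real.sqrt_mul (sq_nonneg s), Real.sqrt_sq hs]

noncomputable def rotv {n : ℕ} (i j : Fin (n+1)) (X : Fin (n+1) → ℝ) (t : ℝ) : Fin (n+1) → ℝ :=
  X + Pi.single i (Real.cos t * X i - Real.sin t * X j - X i)
    + Pi.single j (Real.sin t * X i + Real.cos t * X j - X j)

lemma rotv_cont {n : ℕ} (i j : Fin (n+1)) (X : Fin (n+1) → ℝ) : Continuous (rotv i j X) := by
  unfold rotv
  refine continuous_pi fun k => ?_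
  simp only [Pi.add_apply, Pi.single_apply]
  refine (continuous_const.add ?_).add ?_ <;> split_ifs <;> fun_prop

lemma rotv_zero {n : ℕ} (i j : Fin (n+1)) (X : Fin (n+1) → ℝ) : rotv i j X 0 = X := by
  simp [rotv]

lemma rotv_sum {n : ℕ} (i j : Fin (n+1)) (X w : Fin (n+1) → ℝ) (t : ℝ)
    (F : Finset (Fin (n+1))) (hi : i ∈ F) (hj : j ∈ F) :
    ∑ k ∈ F, w k * rotv i j X t k = ∑ k ∈ F, w k * X k
      + w i * (Real.cos t * X i - Real.sin t * X j - X i)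
      + w j * (Real.sin t * X i + Real.cos t * X j - X j) := by
  simp [rotv, Pi.single_apply, mul_add, Finset.sum_add_distrib, hi, hj]

lemma rotv_rbar {n : ℕ} (i j : Fin (n+1)) (hij : i ≠ j) (X : Fin (n+1) → ℝ) (t : ℝ)
    (hi : (i:ℕ) < n - 1) (hj : (j:ℕ) < n - 1) : rbar n (rotv i j X t) = rbar n X := by
  unfold rbar
  congr 1
  have : ∀ k, rotv i j X t k ^ 2 = X k ^ 2
      + (if k = i then (Real.cos t * X i - Real.sin t * X j)^2 - X i ^2 else 0)
      + (if k = j then (Real.sin t * X i + Real.cos t * X j)^2 - X j^2 else 0) := by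
    intro k
    by_cases h1 : k = i
    · subst h1
      simp [rotv, Pi.single_apply, hij]
    · by_cases h2 : k = j
      · subst h2
        simp [rotv, Pi.single_apply, h1]
      · simp [rotv, Pi.single_apply, h1, h2]
  simp only [this, Finset.sum_add_distrib]
  simp [hi, hj]
  linear_combination (X i ^2 + X j^2) * Real.sin_sq_add_cos_sq t

lemma sum_split (n : ℕ) (hn : 4 ≤ n) (iy iz : Fin (n+1)) (hiy : (iy:ℕ) = n - 1)
    (hiz : (iz:ℕ) = n) (f : Fin (n+1) → ℝ) :
    ∑ k, f k = ∑ k ∈ Finset.univ.filter (fun i : Fin (n + 1) => (i : ℕ) < n - 1), f k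
      + f iy + f iz := by
  rw [← Finset.sum_filter_add_sum_filter_not Finset.univ (fun i : Fin (n + 1) => (i : ℕ) < n - 1)]
  have : Finset.univ.filter (fun i : Fin (n + 1) => ¬ (i : ℕ) < n - 1)
      = {iy, iz} := by
    ext k
    simp [Fin.ext_iff]
    omega
  rw [this, Finset.sum_pair (by simp [Fin.ext_iff]; omega), add_assoc]

lemma skew_quad {m : ℕ} (A : Matrix (Fin m) (Fin m) ℝ) (hA : Aᵀ = -A) (F : Finset (Fin m))
    (X : Fin m → ℝ) : ∑ i ∈ F, (∑ j ∈ F, A i j * X j) * X i = 0 := by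
  have h : ∀ i j, A j i = - A i j := fun i j => by
    have := congrFun (congrFun hA i) j
    simpa using this
  have e : ∑ i ∈ F, (∑ j ∈ F, A i j * X j) * X i
      = - ∑ i ∈ F, (∑ j ∈ F, A i j * X j) * X i := by
    conv_lhs => simp only [Finset.sum_mul]
    rw [Finset.sum_comm, ← Finset.sum_neg_distrib]
    refine Finset.sum_congr rfl fun i _ => ?_
    rw [Finset.sum_mul, ← Finset.sum_neg_distrib]
    refine Finset.sum_congr rfl fun j _ => ?_
    rw [h i j]; ring
  linarith

lemma key (n : ℕ) (hn : 4 ≤ n) (u u1 u2 : ℝ → ℝ) (hcu : ContinuousOn u (Set.Ici 0))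
    (hd1 : ∀ r > 0, HasDerivAt u (u1 r) r)
    (hd2 : ∀ r > 0, HasDerivAt u1 (u2 r) r)
    (hODE : ∀ r > (0:ℝ), u2 r / (1 + (u1 r) ^ 2) + (n - 1 : ℝ) * u1 r / r = 1)
    (A : Matrix (Fin (n + 1)) (Fin (n + 1)) ℝ) (hA : Aᵀ = -A) (b : Fin (n + 1) → ℝ)
    (V : Set (Fin (n + 1) → ℝ)) (hV : IsOpen V) (p : Fin (n + 1) → ℝ) (hpV : p ∈ V)
    (hpM : p ∈ bowlTimesR n u) (hp : 0 < rbar n p)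
    (iy iz : Fin (n+1)) (hiy : (iy:ℕ) = n - 1) (hiz : (iz:ℕ) = n)
    (F : Finset (Fin (n+1))) (hF : F = Finset.univ.filter (fun i : Fin (n + 1) => (i : ℕ) < n - 1))
    (H : ∀ x ∈ V ∩ bowlTimesR n u,
      ∑ i ∈ F, (A.mulVec x + b) i * (u1 (rbar n x) * x i / rbar n x) = (A.mulVec x + b) iy) :
    (∀ i : Fin (n+1), (i:ℕ) < n - 1 → A i iy = 0 ∧ b i = 0 ∧ A i iz = 0) ∧
      A iy iz = 0 ∧ b iy = 0 := by
  have hsk : ∀ i j, A j i = - A i j := fun i j => by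
    have := congrFun (congrFun hA i) j
    simpa using this
  have hFm : ∀ i, i ∈ F ↔ (i:ℕ) < n - 1 := by intro i; simp [hF]
  have hyF : iy ∉ F := by rw [hFm, hiy]; simp
  have hzy : iz ≠ iy := by intro h; rw [h] at hiz; omega
  have hzF : iz ∉ F := by rw [hFm, hiz]; omega
  have hsplit : ∀ f : Fin (n+1) → ℝ, ∑ k, f k = ∑ k ∈ F, f k + f iy + f iz := by
    intro f; rw [hF]; exact sum_split n hn iy iz hiy hiz f
  have hr0 : ∀ X, 0 ≤ rbar n X := fun X => Real.sqrt_nonneg _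
  -- step 1
  have E1 : ∀ᶠ X in nhds p, 0 < rbar n X ∧
      ∑ i ∈ F, (u1 (rbar n X) / rbar n X *
        (u (rbar n X) * A i iy + X iz * A i iz + b i) + A i iy) * X i
        = A iy iz * X iz + b iy := by
    have hPc : Continuous (fun X : Fin (n+1) → ℝ => Function.update X iy (u (rbar n X))) := by
      refine continuous_id.update iy ?_
      exact hcu.comp_continuous (rbar_cont n) hr0
    have hPp : Function.update p iy (u (rbar n p)) = p := by
      have : u (rbar n p) = p iy := by rw [← hpM]; exact congrArg p (Fin.ext hiy.symm)
      rw [this, Function.update_eq_self]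
    have hev : ∀ᶠ X in nhds p, Function.update X iy (u (rbar n X)) ∈ V := by
      apply hPc.continuousAt.eventually
      simp only [hPp]
      exact hV.mem_nhds hpV
    have hpos : ∀ᶠ X in nhds p, 0 < rbar n X :=
      (rbar_cont n).continuousAt.eventually (lt_mem_nhds hp)
    filter_upwards [hev, hpos] with X hX hXp
    refine ⟨hXp, ?_⟩
    set x := Function.update X iy (u (rbar n X)) with hx
    have hxF : ∀ i ∈ F, x i = X i := by
      intro i hi
      rw [hx, Function.update_of_ne]
      rintro rfl; exact hyF hi
    have hxz : x iz = X iz := by rw [hx, Function.update_of_ne hzy]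
    have hxy : x iy = u (rbar n X) := by rw [hx, Function.update_self]
    have hxr : rbar n x = rbar n X :=
      rbar_single_mul n _ _ fun i hi => hxF i ((hFm i).2 hi)
    have hxM : x ∈ bowlTimesR n u := by
      show x ⟨n-1, _⟩ = _
      rw [hxr, ← hxy]; exact congrArg x (Fin.ext hiy.symm)
    have h := H x ⟨hX, hxM⟩
    have hmv : ∀ i, (A.mulVec x + b) i = ∑ j ∈ F, A i j * X j + A i iy * u (rbar n X)
        + A i iz * X iz + b i := by
      intro i
      simp only [Pi.add_apply, Matrix.mulVec, dotProduct]
      rw [hsplit, hxy, hxz]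
      congr 3
      exact Finset.sum_congr rfl fun j hj => by rw [hxF j hj]
    have hyy : A iy iy = 0 := by have := hsk iy iy; linarith
    rw [hmv iy, hyy, hxr] at h
    have h2 : ∑ i ∈ F, (A.mulVec x + b) i * (u1 (rbar n X) * x i / rbar n X)
        = u1 (rbar n X) / rbar n X * ∑ i ∈ F, (∑ j ∈ F, A i j * X j) * X i
         + ∑ i ∈ F, (u1 (rbar n X) / rbar n X *
        (u (rbar n X) * A i iy + X iz * A i iz + b i)) * X i := by
      rw [Finset.mul_sum, ← Finset.sum_add_distrib]
      refine Finset.sum_congr rfl fun i hi => ?_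
      rw [hmv i, hxF i hi]; ring
    rw [h2, skew_quad A hA] at h
    have h3 : ∑ j ∈ F, A iy j * X j = - ∑ i ∈ F, A i iy * X i := by
      rw [← Finset.sum_neg_distrib]
      exact Finset.sum_congr rfl fun j hj => by rw [hsk j iy]; ring
    simp only [add_mul, Finset.sum_add_distrib] at h ⊢
    linarith
  -- step 2
  have E2 : ∀ᶠ X in nhds p, (∀ i ∈ F, u1 (rbar n X) *
        (u (rbar n X) * A i iy + X iz * A i iz + b i) + rbar n X * A i iy = 0)
        ∧ A iy iz * X iz + b iy = 0 := by
    filter_upwards [E1.eventually_nhds] with X hX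
    have hXp := hX.self_of_nhds.1
    have hXe := hX.self_of_nhds.2
    set w : Fin (n+1) → ℝ := fun i => u1 (rbar n X) / rbar n X *
        (u (rbar n X) * A i iy + X iz * A i iz + b i) + A i iy with hw
    have hrot : ∀ i ∈ F, ∀ j ∈ F, i ≠ j → (w i * X i + w j * X j = 0 ∧
        w j * X i - w i * X j = 0) := by
      intro i hi j hj hij
      have hiz' : iz ≠ i := by rintro rfl; exact hzF hi
      have hjz' : iz ≠ j := by rintro rfl; exact hzF hj
      have ht : Filter.Tendsto (rotv i j X) (nhds 0) (nhds X) := by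
        have := (rotv_cont i j X).tendsto 0
        rwa [rotv_zero] at this
      have := rot_aux (w i * X i + w j * X j) (w j * X i - w i * X j)
        (-(w i * X i + w j * X j)) (by
          filter_upwards [ht.eventually hX] with t h
          have h := h.2
          have hz : rotv i j X t iz = X iz := by simp [rotv, Pi.single_apply, hiz', hjz']
          rw [rotv_rbar i j hij X t ((hFm i).1 hi) ((hFm j).1 hj), hz] at h
          change ∑ k ∈ F, w k * rotv i j X t k = _ at h
          rw [rotv_sum i j X w t F hi hj] at h
          linear_combination h - hXe)
      exact ⟨this.1, this.2.1⟩
    obtain ⟨j, hj, hXj⟩ : ∃ j ∈ F, X j ≠ 0 := by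
      by_contra hcon
      push Not at hcon
      have : rbar n X = 0 := by
        unfold rbar
        rw [← hF, Finset.sum_eq_zero, Real.sqrt_zero]
        intro i hi; rw [hcon i hi]; norm_num
      linarith
    have h2 : ∀ i ∈ F, i ≠ j → w i = 0 ∧ w j = 0 := by
      intro i hi hij
      obtain ⟨e1, e2⟩ := hrot i hi j hj hij
      have hs : 0 < X i ^ 2 + X j ^ 2 := by positivity
      constructor
      · have : w i * (X i ^ 2 + X j ^ 2) = 0 := by linear_combination X i * e1 - X j * e2
        exact (mul_eq_zero.1 this).resolve_right hs.ne'
      · have : w j * (X i ^ 2 + X j ^ 2) = 0 := by linear_combination X j * e1 + X i * e2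
        exact (mul_eq_zero.1 this).resolve_right hs.ne'
    obtain ⟨k, hk, hkj⟩ : ∃ k ∈ F, k ≠ j := by
      by_cases h0 : j = ⟨0, by omega⟩
      · refine ⟨⟨1, by omega⟩, (hFm _).2 (by simp; omega), ?_⟩
        rw [h0]; simp [Fin.ext_iff]
      · exact ⟨⟨0, by omega⟩, (hFm _).2 (by simp; omega), fun h => h0 h.symm⟩
    have hw0 : ∀ i ∈ F, w i = 0 := by
      intro i hi
      by_cases hij : i = j
      · rw [hij]; exact (h2 k hk hkj).2
      · exact (h2 i hi hij).1
    constructor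
    · intro i hi
      have := hw0 i hi
      simp only [hw] at this
      have h5 := congrArg (fun t => rbar n X * t) this
      simp only [mul_add, mul_zero] at h5
      field_simp at h5
      linarith
    · rw [← hXe]
      exact Finset.sum_eq_zero fun i hi => by
        change w i * X i = 0
        rw [hw0 i hi, zero_mul]
  -- step 3
  have E3 : ∀ᶠ X in nhds p, (∀ i ∈ F, u1 (rbar n X) * A i iz = 0 ∧ u1 (rbar n X) *
        (u (rbar n X) * A i iy + b i) + rbar n X * A i iy = 0)
        ∧ A iy iz = 0 ∧ b iy = 0 := by
    filter_upwards [E2.eventually_nhds] with X hX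
    have ht : Filter.Tendsto (fun t : ℝ => X + Pi.single iz t) (nhds 0) (nhds X) := by
      have : Continuous (fun t : ℝ => X + Pi.single iz t) := by
        refine continuous_const.add (continuous_single (A := fun _ : Fin (n+1) => ℝ) iz)
      simpa using this.tendsto 0
    have hall := ((ht.eventually hX).filter_mono nhdsWithin_le_nhds).and
      (self_mem_nhdsWithin : Set.Ioi (0:ℝ) ∈ nhdsWithin 0 (Set.Ioi 0))
    obtain ⟨t, ⟨h1, h2⟩, ht0⟩ := hall.exists
    have ht0 : t ≠ 0 := ne_of_gt ht0
    obtain ⟨g1, g2⟩ := hX.self_of_nhds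
    have hrr : rbar n (X + Pi.single iz t) = rbar n X := by
      refine rbar_single_mul n _ _ fun i hi => ?_
      have : i ≠ iz := by rintro rfl; exact hzF ((hFm _).2 hi)
      simp [Pi.single_apply, this]
    simp only [hrr, Pi.add_apply, Pi.single_eq_same] at h1 h2
    have hd : A iy iz = 0 := by
      have : A iy iz * t = 0 := by linarith
      exact (mul_eq_zero.1 this).resolve_right ht0
    refine ⟨fun i hi => ?_, hd, ?_⟩
    · have e1 := h1 i hi
      have e2 := g1 i hi
      have e3 : u1 (rbar n X) * A i iz = 0 := by
        have : u1 (rbar n X) * A i iz * t = 0 := by linarith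
        exact (mul_eq_zero.1 this).resolve_right ht0
      refine ⟨e3, ?_⟩
      linear_combination e2 - X iz * e3
    · rw [hd] at g2; linarith
  refine ⟨fun i hi => ?_, E3.self_of_nhds.2⟩
  refine ode_aux n u u1 u2 hd1 hd2 hODE (rbar n p) hp _ _ _ ?_
  have ht : Filter.Tendsto (fun r : ℝ => (r / rbar n p) • p) (nhds (rbar n p)) (nhds p) := by
    have : Continuous (fun r : ℝ => (r / rbar n p) • p) := by fun_prop
    have := this.tendsto (rbar n p)
    simpa [hp.ne'] using this
  filter_upwards [ht.eventually E3, lt_mem_nhds hp] with r hr hrp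
  have := hr.1 i ((hFm i).2 hi)
  rwa [rbar_smul n _ (by positivity), div_mul_cancel₀ _ hp.ne'] at this

/-- Let `n ≥ 4`, `u` the Bowl soliton profile (C² on `[0,∞)`,
`u(0) = u'(0) = 0`, `u'' ≥ 0`, satisfying `u''/(1+u'²) + (n−1)u'/r = 1`), `{J_α}` an
orthonormal basis of `so(n−1)`, `S` orthogonal, `q ∈ ℝ^{n+1}`, and
`K_α(x) = S J_α S⁻¹ (x − q)`.  If `⟨K_α(x), ν(x)⟩ = 0` for all `x` in a nonempty
relatively open subset `U` of `M = Bowl^{n−1} × ℝ` consisting of points with `x̄ ≠ 0`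
(with `ν(x) = (1+u'²)^{−1/2}(u' x̄/|x̄|, −1, 0)`), then each `S J_α S⁻¹ ∈ so(n−1)`,
`S J_α S⁻¹ q = 0`, hence `K_α(x) = (S J_α S⁻¹) x`, and the matrices `{S J_α S⁻¹}` form an
orthonormal basis of `so(n−1)`. -/
theorem bowl_rotation_vector_fields_normalize
    (n : ℕ) (hn : 4 ≤ n)
    (u : ℝ → ℝ)
    (huC2 : ContDiffOn ℝ 2 u (Set.Ici 0))
    (hu0 : u 0 = 0)
    (hu'0 : derivWithin u (Set.Ici 0) 0 = 0)
    (hu'' : ∀ r ≥ (0:ℝ), 0 ≤ derivWithin (derivWithin u (Set.Ici 0)) (Set.Ici 0) r)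
    (hODE : ∀ r > (0:ℝ),
      derivWithin (derivWithin u (Set.Ici 0)) (Set.Ici 0) r
          / (1 + (derivWithin u (Set.Ici 0) r) ^ 2)
        + (n - 1 : ℝ) * derivWithin u (Set.Ici 0) r / r = 1)
    (J : Fin ((n - 1) * (n - 2) / 2) → Matrix (Fin (n + 1)) (Fin (n + 1)) ℝ)
    (hJmem : ∀ α, memSOnm1 n (J α))
    (hJorth : ∀ α β, Matrix.trace (J α * (J β)ᵀ) = if α = β then 1 else 0)
    (hJspan : ∀ B, memSOnm1 n B →
      ∃ c : Fin ((n - 1) * (n - 2) / 2) → ℝ, B = ∑ α, c α • J α)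
    (S : Matrix (Fin (n + 1)) (Fin (n + 1)) ℝ) (hS : S * Sᵀ = 1)
    (q : Fin (n + 1) → ℝ)
    (K : Fin ((n - 1) * (n - 2) / 2) → (Fin (n + 1) → ℝ) → Fin (n + 1) → ℝ)
    (hK : ∀ α x, K α x = (S * J α * Sᵀ).mulVec (x - q))
    (U : Set (Fin (n + 1) → ℝ))
    (hUsub : U ⊆ bowlTimesR n u)
    (hUxbar : ∀ x ∈ U, 0 < rbar n x)
    (hUrelOpen : ∃ V : Set (Fin (n + 1) → ℝ), IsOpen V ∧ U = V ∩ bowlTimesR n u)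
    (hUne : U.Nonempty)
    (hnormal : ∀ x ∈ U, ∀ α,
      (Real.sqrt (1 + (derivWithin u (Set.Ici 0) (rbar n x)) ^ 2))⁻¹ *
        ((∑ i ∈ Finset.univ.filter (fun i : Fin (n + 1) => (i : ℕ) < n - 1),
            K α x i * (derivWithin u (Set.Ici 0) (rbar n x) * x i / rbar n x))
          - K α x ⟨n - 1, by omega⟩) = 0) :
    (∀ α, memSOnm1 n (S * J α * Sᵀ)) ∧
    (∀ α, (S * J α * Sᵀ).mulVec q = 0) ∧
    (∀ α x, K α x = (S * J α * Sᵀ).mulVec x) ∧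
    (∀ α β, Matrix.trace ((S * J α * Sᵀ) * (S * J β * Sᵀ)ᵀ) = if α = β then 1 else 0) ∧
    (∀ B, memSOnm1 n B →
      ∃ c : Fin ((n - 1) * (n - 2) / 2) → ℝ, B = ∑ α, c α • (S * J α * Sᵀ)) := by
  have hST : Sᵀ * S = 1 := mul_eq_one_comm.1 hS
  obtain ⟨V, hV, hUV⟩ := hUrelOpen
  obtain ⟨p, hpU⟩ := hUne
  have hpV : p ∈ V := by rw [hUV] at hpU; exact hpU.1
  have hcu : ContinuousOn u (Set.Ici 0) := huC2.continuousOn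
  have hnh : ∀ r > (0:ℝ), Set.Ici (0:ℝ) ∈ nhds r := fun r hr => Ici_mem_nhds hr
  have hd1 : ∀ r > (0:ℝ), HasDerivAt u (derivWithin u (Set.Ici 0) r) r := fun r hr =>
    ((huC2.differentiableOn (by norm_num)) r hr.le).hasDerivWithinAt.hasDerivAt (hnh r hr)
  have hC1 : DifferentiableOn ℝ (derivWithin u (Set.Ici 0)) (Set.Ici 0) :=
    (huC2.derivWithin (uniqueDiffOn_Ici 0) (m := 1) (by norm_num)).differentiableOn (by norm_num)
  have hd2 : ∀ r > (0:ℝ), HasDerivAt (derivWithin u (Set.Ici 0))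
      (derivWithin (derivWithin u (Set.Ici 0)) (Set.Ici 0) r) r := fun r hr =>
    (hC1 r hr.le).hasDerivWithinAt.hasDerivAt (hnh r hr)
  have hskew : ∀ α, (S * J α * Sᵀ)ᵀ = -(S * J α * Sᵀ) := by
    intro α
    simp [Matrix.transpose_mul, (hJmem α).1, Matrix.mul_assoc]
  have hkey := fun α => key n hn u _ _ hcu hd1 hd2 hODE (S * J α * Sᵀ) (hskew α)
    (-((S * J α * Sᵀ).mulVec q)) V hV p hpV (hUsub hpU) (hUxbar p hpU) ⟨n - 1, by omega⟩ ⟨n, by omega⟩ rfl rfl _ rfl (by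
      intro x hx
      rw [← hUV] at hx
      have h := hnormal x hx α
      have hpos : 0 < Real.sqrt (1 + (derivWithin u (Set.Ici 0) (rbar n x)) ^ 2) := by
        apply Real.sqrt_pos.2; positivity
      have h := (mul_eq_zero.1 h).resolve_left (inv_ne_zero hpos.ne')
      rw [← sub_eq_add_neg, ← Matrix.mulVec_sub, ← hK]
      linarith)
  have hmem : ∀ α, memSOnm1 n (S * J α * Sᵀ) := by
    intro α
    refine ⟨hskew α, ?_⟩
    obtain ⟨h1, h2, -⟩ := hkey α
    have hsk : ∀ i j, (S * J α * Sᵀ) j i = - (S * J α * Sᵀ) i j := fun i j => by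
      have := congrFun (congrFun (hskew α) i) j
      rwa [Matrix.transpose_apply, Matrix.neg_apply] at this
    generalize S * J α * Sᵀ = A at *
    have hcol : ∀ i j : Fin (n+1), n - 1 ≤ (j:ℕ) → A i j = 0 := by
      intro i j hj
      by_cases hi : (i:ℕ) < n - 1
      · obtain ⟨g1, -, g3⟩ := h1 i hi
        by_cases hj' : (j:ℕ) = n - 1
        · have : j = ⟨n-1, by omega⟩ := Fin.ext hj'
          rw [this]; exact g1
        · have : j = ⟨n, by omega⟩ := Fin.ext (by simp; omega)
          rw [this]; exact g3
      · by_cases hij : i = j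
        · subst hij; have := hsk i i; linarith
        · have hne : (i:ℕ) ≠ j := fun h => hij (Fin.ext h)
          by_cases hj' : (j:ℕ) = n - 1
          · have e1 : j = ⟨n-1, by omega⟩ := Fin.ext hj'
            have e2 : i = ⟨n, by omega⟩ := Fin.ext (by simp; omega)
            rw [hsk, e1, e2, h2, neg_zero]
          · have e1 : j = ⟨n, by omega⟩ := Fin.ext (by simp; omega)
            have e2 : i = ⟨n-1, by omega⟩ := Fin.ext (by simp; omega)
            rw [e1, e2, h2]
    rintro i j (h | h)
    · rw [hsk, hcol j i h, neg_zero]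
    · exact hcol i j h
  have hq : ∀ α, (S * J α * Sᵀ).mulVec q = 0 := by
    intro α
    funext i
    by_cases hi : (i:ℕ) < n - 1
    · have := ((hkey α).1 i hi).2.1
      simpa using this
    · simp only [Matrix.mulVec, dotProduct, Pi.zero_apply]
      refine Finset.sum_eq_zero fun j _ => ?_
      rw [(hmem α).2 i j (Or.inl (by omega)), zero_mul]
  have horth : ∀ α β, Matrix.trace ((S * J α * Sᵀ) * (S * J β * Sᵀ)ᵀ)
      = if α = β then 1 else 0 := by
    intro α β
    rw [← hJorth α β]
    have : (S * J α * Sᵀ) * (S * J β * Sᵀ)ᵀ = S * (J α * (J β)ᵀ * Sᵀ) := by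
      simp only [Matrix.transpose_mul, Matrix.transpose_transpose, Matrix.mul_assoc]
      rw [← Matrix.mul_assoc Sᵀ S, hST, Matrix.one_mul]
    rw [this, Matrix.trace_mul_comm, Matrix.mul_assoc, hST, Matrix.mul_one]
  refine ⟨hmem, hq, fun α x => by rw [hK, Matrix.mulVec_sub, hq, sub_zero], horth, ?_⟩
  intro B hB
  set T : Fin ((n - 1) * (n - 2) / 2) → Matrix (Fin (n + 1)) (Fin (n + 1)) ℝ :=
    fun α => S * J α * Sᵀ with hT
  have hli : LinearIndependent ℝ T := by
    rw [Fintype.linearIndependent_iff]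
    intro g hg β
    have h := congrArg (fun M => Matrix.trace (M * (T β)ᵀ)) hg
    simp only [Finset.sum_mul, Matrix.trace_sum, Matrix.smul_mul, Matrix.trace_smul,
      Matrix.zero_mul, Matrix.trace_zero, hT, horth] at h
    simpa using h
  have hin : ∀ C, memSOnm1 n C → C ∈ Submodule.span ℝ (Set.range J) := by
    intro C hC
    obtain ⟨c, hc⟩ := hJspan C hC
    rw [hc]
    exact Submodule.sum_mem _ fun α _ =>
      Submodule.smul_mem _ _ (Submodule.subset_span ⟨α, rfl⟩)
  have hle : Submodule.span ℝ (Set.range T) ≤ Submodule.span ℝ (Set.range J) := by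
    rw [Submodule.span_le]
    rintro _ ⟨α, rfl⟩
    exact hin _ (hmem α)
  have heq := Submodule.eq_of_le_of_finrank_le hle (by
    rw [finrank_span_eq_card hli]
    exact finrank_range_le_card J)
  have hBT := hin B hB
  rw [← heq, Submodule.mem_span_range_iff_exists_fun] at hBT
  obtain ⟨c, hc⟩ := hBT
  exact ⟨c, hc.symm⟩
end

section
/- Let n ≥ 3, let {J_α : 1 ≤ α ≤ (n−1)(n−2)/2} be an orthonormal basis of so(n−1), let A be a skew-symmetric real (n+1)×(n+1) matrix orthogonal to so(n−1) ⊕ so(2) with respect to ⟨A, B⟩ = Tr(A Bᵀ) (equivalently, A_{ij} = 0 whenever both i, j ≤ n−1 and whenever both i, j ∈ {n, n+1}), and for each α let c_α ∈ ℝ^{n+1} be a vector whose last two coordinates vanish. If there is a nonempty relatively open subset U of the cylinder C such that ⟨[A, J_α] x + c_α, ν(x)⟩ = 0 for every x ∈ U and every α (where [A, J_α] = A J_α − J_α A), then A = 0 and c_α = 0 for every α. -/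
open Matrix

theorem sphere_lin_aux {ι : Type*} [Fintype ι] [DecidableEq ι] (S : Finset ι) (w x0 : ι → ℝ)
    (V : Set (ι → ℝ)) (hV : IsOpen V) (hx0 : x0 ∈ V) (h1 : ∑ i ∈ S, (x0 i) ^ 2 = 1)
    (h : ∀ x ∈ V, ∑ i ∈ S, (x i) ^ 2 = 1 → ∑ i ∈ S, w i * x i = 0) :
    ∀ i ∈ S, w i = 0 := by
  let r : ℝ → ℝ := fun t => Real.sqrt (∑ i ∈ S, (x0 i + t * w i) ^ 2)
  let g : ℝ → ι → ℝ := fun t i => if i ∈ S then (x0 i + t * w i) / r t else x0 i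
  have hr : Continuous r := by fun_prop
  have hr0 : r 0 = 1 := by simp [r, h1]
  have hg0 : g 0 = x0 := by
    funext i
    simp [g, hr0]
  have hg : ContinuousAt g 0 := by
    rw [continuousAt_pi]
    intro i
    by_cases hi : i ∈ S
    · simp only [g, hi, if_true]
      exact ContinuousAt.div (by fun_prop) hr.continuousAt (by simp [hr0])
    · simp only [g, hi, if_false]
      exact continuousAt_const
  have e1 : ∀ᶠ t in nhds (0:ℝ), g t ∈ V := hg.eventually_mem (by
    rw [hg0]; exact hV.mem_nhds hx0)
  have e2 : ∀ᶠ t in nhds (0:ℝ), 0 < r t :=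
    hr.continuousAt.eventually_const_lt (by simp [hr0])
  have e3 := (e1.and e2)
  obtain ⟨ε, hε, hb⟩ := Metric.eventually_nhds_iff.1 e3
  obtain ⟨hm, hp⟩ := hb (y := ε / 2) (by simp [abs_of_pos hε]; linarith)
  have hsq : (r (ε/2)) ^ 2 = ∑ i ∈ S, (x0 i + (ε/2) * w i) ^ 2 :=
    Real.sq_sqrt (Finset.sum_nonneg fun i _ => sq_nonneg _)
  have hs : ∑ i ∈ S, (g (ε/2) i) ^ 2 = 1 := by
    have : ∑ i ∈ S, (g (ε/2) i) ^ 2 = ∑ i ∈ S, (x0 i + (ε/2) * w i) ^ 2 / (r (ε/2)) ^ 2 := by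
      refine Finset.sum_congr rfl fun i hi => ?_
      simp only [g, hi, if_true, div_pow]
    rw [this, ← Finset.sum_div, ← hsq, div_self (by positivity)]
  have h2 := h _ hm hs
  have h3 : ∑ i ∈ S, w i * g (ε/2) i
      = (∑ i ∈ S, w i * x0 i + (ε/2) * ∑ i ∈ S, w i ^ 2) / r (ε/2) := by
    rw [Finset.mul_sum, ← Finset.sum_add_distrib, Finset.sum_div]
    refine Finset.sum_congr rfl fun i hi => ?_
    simp only [g, hi, if_true]
    ring
  rw [h3, h x0 hx0 h1, zero_add, div_eq_zero_iff] at h2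
  have h4 : ∑ i ∈ S, w i ^ 2 = 0 := by
    rcases h2 with h2 | h2
    · rcases mul_eq_zero.1 h2 with h2 | h2
      · linarith
      · exact h2
    · linarith
  intro i hi
  have := (Finset.sum_eq_zero_iff_of_nonneg (fun i _ => sq_nonneg (w i))).1 h4 i hi
  exact pow_eq_zero_iff (two_ne_zero) |>.1 this

/-- Let `n ≥ 3`, `{J_α}` an orthonormal basis of `so(n−1)`, `A` skew-symmetric
and orthogonal to `so(n−1) ⊕ so(2)` (equivalently, `A_{ij} = 0` whenever both `i, j ≤ n−1`
and whenever both `i, j ∈ {n, n+1}`), and `c_α ∈ ℝ^{n+1}` with vanishing last two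
coordinates.  If `⟨[A, J_α]x + c_α, ν(x)⟩ = 0` for every `x` in some nonempty relatively
open subset `U` of the cylinder (with `ν(x) = (x₁,…,x_{n−1},0,0)`), then `A = 0` and all
`c_α = 0`. -/
theorem cylinder_bracket_vector_fields_vanish
    (n : ℕ) (hn : 3 ≤ n)
    (J : Fin ((n - 1) * (n - 2) / 2) → Matrix (Fin (n + 1)) (Fin (n + 1)) ℝ)
    (hJmem : ∀ α, memSOnm1 n (J α))
    (hJorth : ∀ α β, Matrix.trace (J α * (J β)ᵀ) = if α = β then 1 else 0)
    (hJspan : ∀ B, memSOnm1 n B →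
      ∃ c : Fin ((n - 1) * (n - 2) / 2) → ℝ, B = ∑ α, c α • J α)
    (A : Matrix (Fin (n + 1)) (Fin (n + 1)) ℝ)
    (hAskew : Aᵀ = -A)
    (hAperp : ∀ i j : Fin (n + 1),
      (((i : ℕ) < n - 1 ∧ (j : ℕ) < n - 1) ∨ (n - 1 ≤ (i : ℕ) ∧ n - 1 ≤ (j : ℕ))) →
      A i j = 0)
    (c : Fin ((n - 1) * (n - 2) / 2) → Fin (n + 1) → ℝ)
    (hc : ∀ α, ∀ i : Fin (n + 1), n - 1 ≤ (i : ℕ) → c α i = 0)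
    (U : Set (Fin (n + 1) → ℝ))
    (hUsub : U ⊆ cylinderSet n)
    (hUrelOpen : ∃ V : Set (Fin (n + 1) → ℝ), IsOpen V ∧ U = V ∩ cylinderSet n)
    (hUne : U.Nonempty)
    (hnormal : ∀ x ∈ U, ∀ α,
      ∑ i ∈ Finset.univ.filter (fun i : Fin (n + 1) => (i : ℕ) < n - 1),
        ((A * J α - J α * A).mulVec x i + c α i) * x i = 0) :
    A = 0 ∧ ∀ α, c α = 0 := by
  obtain ⟨V, hV, rfl⟩ := hUrelOpen
  obtain ⟨x0, hx0V, hx0C⟩ := hUne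
  set S := Finset.univ.filter (fun i : Fin (n + 1) => (i : ℕ) < n - 1) with hS
  have memS : ∀ i : Fin (n+1), i ∈ S ↔ (i : ℕ) < n - 1 := by intro i; simp [hS]
  -- the upper part of the bracket
  have key : ∀ α x, ∀ i ∈ S, (A * J α - J α * A).mulVec x i
      = - ∑ k, (if k ∈ S then 0 else (J α * A) i k * x k) := by
    intro α x i hi
    rw [memS] at hi
    simp only [Matrix.mulVec, dotProduct]
    rw [← Finset.sum_neg_distrib]
    refine Finset.sum_congr rfl fun k _ => ?_
    have hAJ : (A * J α) i k = 0 := by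
      rw [Matrix.mul_apply]
      refine Finset.sum_eq_zero fun l _ => ?_
      rcases lt_or_ge (l : ℕ) (n - 1) with hl | hl
      · rw [hAperp i l (Or.inl ⟨hi, hl⟩), zero_mul]
      · rw [(hJmem α).2 l k (Or.inl hl), mul_zero]
    rw [Matrix.sub_apply, hAJ]
    split_ifs with hk
    · rw [memS] at hk
      have : (J α * A) i k = 0 := by
        rw [Matrix.mul_apply]
        refine Finset.sum_eq_zero fun l _ => ?_
        rcases lt_or_ge (l : ℕ) (n - 1) with hl | hl
        · rw [hAperp l k (Or.inl ⟨hl, hk⟩), mul_zero]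
        · rw [(hJmem α).2 i l (Or.inr hl), zero_mul]
      rw [this]; ring
    · ring
  have step1 : ∀ α k, k ∉ S → ∀ x ∈ V, ∑ i ∈ S, (x i) ^ 2 = 1 →
      ∑ i ∈ S, (J α * A) i k * x i = 0 := by
    intro α k hk x hxV hxC
    let g : ℝ → Fin (n+1) → ℝ := fun t => x + t • Pi.single k 1
    have hg : Continuous g := by fun_prop
    have hg0 : g 0 = x := by simp [g]
    have e1 : ∀ᶠ t in nhds (0:ℝ), g t ∈ V := hg.continuousAt.eventually_mem (by
      rw [hg0]; exact hV.mem_nhds hxV)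
    obtain ⟨ε, hε, hb⟩ := Metric.eventually_nhds_iff.1 e1
    have hm := hb (y := ε / 2) (by simp [abs_of_pos hε]; linarith)
    have hgi : ∀ i ∈ S, g (ε/2) i = x i := by
      intro i hi
      have : i ≠ k := fun h => hk (h ▸ hi)
      simp [g, this]
    have hgC : g (ε/2) ∈ cylinderSet n := by
      change ∑ i ∈ S, (g (ε/2) i) ^ 2 = 1
      rw [← hxC]
      exact Finset.sum_congr rfl fun i hi => by rw [hgi i hi]
    have a1 := hnormal _ ⟨hm, hgC⟩ α
    have a2 := hnormal x ⟨hxV, hxC⟩ α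
    have a3 : ∑ i ∈ S, ((A * J α - J α * A).mulVec x i + c α i) * x i -
        ∑ i ∈ S, ((A * J α - J α * A).mulVec (g (ε/2)) i + c α i) * g (ε/2) i
        = (ε/2) * ∑ i ∈ S, (J α * A) i k * x i := by
      rw [← Finset.sum_sub_distrib, Finset.mul_sum]
      refine Finset.sum_congr rfl fun i hi => ?_
      rw [hgi i hi]
      have b : (A * J α - J α * A).mulVec (g (ε/2)) i
          = (A * J α - J α * A).mulVec x i - (ε/2) * (J α * A) i k := by
        rw [key α _ i hi, key α _ i hi]
        have : ∑ l, (if l ∈ S then 0 else (J α * A) i l * g (ε/2) l)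
            = ∑ l, (if l ∈ S then 0 else (J α * A) i l * x l)
              + ∑ l, (if l = k then (ε/2) * (J α * A) i k else 0) := by
          rw [← Finset.sum_add_distrib]
          refine Finset.sum_congr rfl fun l _ => ?_
          by_cases hlk : l = k
          · subst hlk
            simp [hk, g]; ring
          · simp [hlk, g]
        rw [this]
        simp
        ring
      rw [b]; ring
    rw [a1, a2, sub_zero] at a3
    rcases mul_eq_zero.1 a3.symm with h | h
    · linarith
    · exact h
  have step2 : ∀ α k, k ∉ S → ∀ i ∈ S, (J α * A) i k = 0 := fun α k hk =>
    sphere_lin_aux S (fun i => (J α * A) i k) x0 V hV hx0V hx0C (step1 α k hk)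
  have step3 : ∀ α, ∀ i ∈ S, c α i = 0 := by
    intro α
    refine sphere_lin_aux S (c α) x0 V hV hx0V hx0C ?_
    intro x hxV hxC
    rw [← hnormal x ⟨hxV, hxC⟩ α]
    refine Finset.sum_congr rfl fun i hi => ?_
    rw [key α x i hi, Finset.sum_eq_zero]
    · ring
    · intro k _
      split_ifs with hk
      · rfl
      · rw [step2 α k hk i hi, zero_mul]
  have step4 : ∀ B, memSOnm1 n B → ∀ k, k ∉ S → ∀ i ∈ S, (B * A) i k = 0 := by
    intro B hB k hk i hi
    obtain ⟨d, rfl⟩ := hJspan B hB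
    rw [Finset.sum_mul, Matrix.sum_apply]
    refine Finset.sum_eq_zero fun α _ => ?_
    rw [Matrix.smul_mul, Matrix.smul_apply, step2 α k hk i hi, smul_zero]
  have step5 : ∀ k, k ∉ S → ∀ j ∈ S, A j k = 0 := by
    intro k hk j hj
    obtain ⟨i, hi, hij⟩ : ∃ i ∈ S, i ≠ j := by
      by_cases hj0 : (j : ℕ) = 0
      · refine ⟨⟨1, by omega⟩, (memS _).2 (by simp; omega), fun h => ?_⟩
        rw [← h] at hj0; simp at hj0
      · refine ⟨⟨0, by omega⟩, (memS _).2 (by simp; omega), fun h => ?_⟩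
        rw [← h] at hj0; simp at hj0
    have hi2 := (memS i).1 hi
    have hj2 := (memS j).1 hj
    have h := step4 (Matrix.single i j 1 - Matrix.single j i 1) ⟨by
      simp [Matrix.transpose_sub], by
      intro a b hab
      have q1 : ¬ (i = a ∧ j = b) := by rintro ⟨rfl, rfl⟩; omega
      have q2 : ¬ (j = a ∧ i = b) := by rintro ⟨rfl, rfl⟩; omega
      rw [Matrix.sub_apply, Matrix.single_apply, Matrix.single_apply, if_neg q1, if_neg q2,
        sub_zero]⟩ k hk i hi
    rw [Matrix.sub_mul, Matrix.sub_apply, Matrix.single_mul_apply_same,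
      Matrix.single_mul_apply_of_ne _ _ _ _ _ hij] at h
    simpa using h
  refine ⟨?_, fun α => ?_⟩
  · ext i j
    have hsk : A j i = - A i j := congrFun (congrFun hAskew i) j
    by_cases hi : i ∈ S <;> by_cases hj : j ∈ S
    · exact hAperp i j (Or.inl ⟨(memS i).1 hi, (memS j).1 hj⟩)
    · exact step5 j hj i hi
    · have := step5 i hi j hj
      simp only [Matrix.zero_apply]
      linarith
    · rw [memS] at hi hj
      exact hAperp i j (Or.inr ⟨by omega, by omega⟩)
  · funext i
    by_cases hi : i ∈ S
    · exact step3 α i hi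
    · rw [memS] at hi
      exact hc α i (by omega)
end

section
/- Let n ≥ 4, let {J_α : 1 ≤ α ≤ (n−1)(n−2)/2} be an orthonormal basis of so(n−1), let A be a skew-symmetric real (n+1)×(n+1) matrix orthogonal to so(n−1) ⊕ so(2) with respect to ⟨A, B⟩ = Tr(A Bᵀ) (equivalently, A_{ij} = 0 whenever both i, j ≤ n−1 and whenever both i, j ∈ {n, n+1}), and for each α let c_α ∈ ℝ^{n+1} be a vector whose last two coordinates vanish. If there is a nonempty relatively open subset U of M consisting of points with x̄ ≠ 0 such that ⟨[A, J_α] x + c_α, ν(x)⟩ = 0 for every x ∈ U and every α (where [A, J_α] = A J_α − J_α A), then A = 0 and c_α = 0 for every α. -/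
open Matrix

lemma aux_ode (n : ℕ) (hn : 4 ≤ n) (u w w' : ℝ → ℝ)
    (h1 : ∀ s > 0, HasDerivAt u (w s) s) (h2 : ∀ s > 0, HasDerivAt w (w' s) s)
    (hw : ∀ s > 0, 0 < w s)
    (hODE : ∀ s > 0, w' s / (1 + w s ^ 2) + (n - 1 : ℝ) * w s / s = 1)
    (r K : ℝ) (hr : 0 < r) (hK : ∀ᶠ s in nhds r, s / w s + u s = K) : False := by
  have hn0 : (0:ℝ) < n := by exact_mod_cast (by omega : 0 < n)
  have e1 : ∀ᶠ s in nhds r, w s = s / n := by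
    filter_upwards [hK.eventually_nhds, lt_mem_nhds hr] with s hs hs0
    have hd := ((hasDerivAt_id s).div (h2 s hs0) (hw s hs0).ne').add (h1 s hs0)
    have hd2 : HasDerivAt (fun s => s / w s + u s) 0 s :=
      (hasDerivAt_const s K).congr_of_eventuallyEq hs
    have he := hd.unique hd2
    have hp := hw s hs0
    have ho := hODE s hs0
    have hpos : (0:ℝ) < 1 + w s ^ 2 := by positivity
    simp only [id] at he
    field_simp at he ho
    have h3 : w' s * s = w s * (1 + w s ^ 2) := by linarith
    have h4 : (1 + w s ^ 2) * (n * w s - s) = 0 := by linear_combination ho - h3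
    have h5 := (mul_eq_zero.mp h4).resolve_left hpos.ne'
    field_simp
    linarith
  have hd2 : HasDerivAt w (1 / n) r :=
    ((hasDerivAt_id r).div_const (n:ℝ)).congr_of_eventuallyEq e1
  have e2 := (h2 r hr).unique hd2
  have e3 := e1.self_of_nhds
  have ho := hODE r hr
  rw [e2, e3] at ho
  have hpos : (0:ℝ) < 1 + (r / n) ^ 2 := by positivity
  have h6 : (1:ℝ) / n / (1 + (r / n) ^ 2) = 1 / n := by
    have : (n - 1 : ℝ) * (r / n) / r = 1 - 1 / n := by field_simp
    linarith
  rw [div_eq_iff hpos.ne'] at h6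
  have : (0:ℝ) < 1 / n * (r / n) ^ 2 := by positivity
  linarith

lemma aux_pos (n : ℕ) (u : ℝ → ℝ)
    (huC2 : ContDiffOn ℝ 2 u (Set.Ici 0))
    (hu'0 : derivWithin u (Set.Ici 0) 0 = 0)
    (hu'' : ∀ r ≥ (0:ℝ), 0 ≤ derivWithin (derivWithin u (Set.Ici 0)) (Set.Ici 0) r)
    (hODE : ∀ r > (0:ℝ),
      derivWithin (derivWithin u (Set.Ici 0)) (Set.Ici 0) r
          / (1 + (derivWithin u (Set.Ici 0) r) ^ 2)
        + (n - 1 : ℝ) * derivWithin u (Set.Ici 0) r / r = 1) :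
    (∀ s > 0, HasDerivAt u (derivWithin u (Set.Ici 0) s) s) ∧
    (∀ s > 0, HasDerivAt (derivWithin u (Set.Ici 0))
      (derivWithin (derivWithin u (Set.Ici 0)) (Set.Ici 0) s) s) ∧
    (∀ s > 0, 0 < derivWithin u (Set.Ici 0) s) := by
  have hC1 : ContDiffOn ℝ 1 (derivWithin u (Set.Ici 0)) (Set.Ici 0) :=
    huC2.derivWithin (uniqueDiffOn_Ici 0) (by norm_num)
  have hd1 : DifferentiableOn ℝ u (Set.Ici 0) := huC2.differentiableOn (by norm_num)
  have hd2 : DifferentiableOn ℝ (derivWithin u (Set.Ici 0)) (Set.Ici 0) :=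
    hC1.differentiableOn (by norm_num)
  have H2 : ∀ s > 0, HasDerivAt (derivWithin u (Set.Ici 0))
      (derivWithin (derivWithin u (Set.Ici 0)) (Set.Ici 0) s) s := fun s hs =>
    ((hd2 s (le_of_lt hs)).hasDerivWithinAt).hasDerivAt (Ici_mem_nhds hs)
  refine ⟨fun s hs => ((hd1 s (le_of_lt hs)).hasDerivWithinAt).hasDerivAt (Ici_mem_nhds hs),
    H2, ?_⟩
  have hmono : MonotoneOn (derivWithin u (Set.Ici 0)) (Set.Ici 0) := by
    apply monotoneOn_of_deriv_nonneg (convex_Ici 0) hd2.continuousOn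
    · exact hd2.mono interior_subset
    · intro x hx
      rw [interior_Ici] at hx
      rw [(H2 x hx).deriv]
      exact hu'' x (le_of_lt hx)
  have hnn : ∀ s ≥ 0, 0 ≤ derivWithin u (Set.Ici 0) s := fun s hs => by
    have := hmono (by simp) hs hs; rwa [hu'0] at this
  intro s hs
  rcases (hnn s hs.le).lt_or_eq with h | h
  · exact h
  exfalso
  have hz : ∀ t, 0 ≤ t → t ≤ s → derivWithin u (Set.Ici 0) t = 0 := fun t ht hts =>
    le_antisymm ((hmono ht hs.le hts).trans h.ge) (hnn t ht)
  have hs2 : 0 < s / 2 := by positivity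
  have hev : ∀ᶠ t in nhds (s/2), derivWithin u (Set.Ici 0) t = 0 := by
    filter_upwards [lt_mem_nhds hs2, gt_mem_nhds (show s/2 < s by linarith)] with t h1 h2
    exact hz t h1.le h2.le
  have := (H2 _ hs2).unique ((hasDerivAt_const (s/2) (0:ℝ)).congr_of_eventuallyEq hev)
  have ho := hODE _ hs2
  rw [this, hz _ hs2.le (by linarith)] at ho
  simp at ho

lemma aux_line {m : ℕ} {W : Set (Fin m → ℝ)} (hW : IsOpen W) {y : Fin m → ℝ} (hy : y ∈ W)
    (v : Fin m → ℝ) : ∀ᶠ t in nhds (0:ℝ), y + t • v ∈ W := by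
  have hc : Continuous fun t : ℝ => y + t • v := by fun_prop
  exact hc.continuousAt.eventually_mem (hW.mem_nhds (by simpa using hy))

lemma aux_line' {m : ℕ} {W : Set (Fin m → ℝ)} (hW : IsOpen W) {y : Fin m → ℝ} (hy : y ∈ W)
    (v : Fin m → ℝ) : ∃ t : ℝ, t ≠ 0 ∧ y + t • v ∈ W := by
  have h1 : ∀ᶠ t in nhdsWithin (0:ℝ) {0}ᶜ, y + t • v ∈ W :=
    (aux_line hW hy v).filter_mono nhdsWithin_le_nhds
  obtain ⟨t, h, h'⟩ := (h1.and self_mem_nhdsWithin).exists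
  exact ⟨t, h', h⟩

lemma aux_lin {m : ℕ} {W : Set (Fin m → ℝ)} (hW : IsOpen W) (hne : W.Nonempty)
    (v : Fin m → ℝ) (h : ∀ y ∈ W, v ⬝ᵥ y = 0) : v = 0 := by
  obtain ⟨y, hy⟩ := hne
  obtain ⟨t, ht, hty⟩ := aux_line' hW hy v
  have := h _ hty
  rw [dotProduct_add, h y hy, dotProduct_smul, zero_add, smul_eq_mul] at this
  exact dotProduct_self_eq_zero.mp ((mul_eq_zero.mp this).resolve_left ht)

lemma rbar_nonneg' (n : ℕ) (x : Fin (n + 1) → ℝ) : 0 ≤ rbar n x := Real.sqrt_nonneg _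

lemma rbar_congr (n : ℕ) (x y : Fin (n + 1) → ℝ) (h : ∀ i : Fin (n+1), (i:ℕ) < n - 1 → x i = y i) :
    rbar n x = rbar n y := by
  unfold rbar
  congr 1
  apply Finset.sum_congr rfl
  intro i hi
  rw [h i (by simpa using hi)]

lemma rbar_smul_s5 (n : ℕ) (t : ℝ) (ht : 0 ≤ t) (x : Fin (n + 1) → ℝ) :
    rbar n (t • x) = t * rbar n x := by
  unfold rbar
  simp only [Pi.smul_apply, smul_eq_mul, mul_pow, ← Finset.mul_sum]
  rw [Real.sqrt_mul (by positivity), Real.sqrt_sq ht]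

lemma aux_sum (n : ℕ) (v y : Fin (n+1) → ℝ) (hv : ∀ i : Fin (n+1), n - 1 ≤ (i:ℕ) → v i = 0) :
    ∑ i ∈ Finset.univ.filter (fun i : Fin (n + 1) => (i : ℕ) < n - 1), v i * y i = v ⬝ᵥ y := by
  rw [dotProduct, Finset.sum_filter]
  apply Finset.sum_congr rfl
  intro i _
  split_ifs with h
  · rfl
  · rw [hv i (by omega), zero_mul]

lemma aux_J (n : ℕ) (J : Matrix (Fin (n + 1)) (Fin (n + 1)) ℝ) (hJ : memSOnm1 n J)
    (a : Fin (n+1) → ℝ) (i : Fin (n+1)) (hi : n - 1 ≤ (i:ℕ)) : (J *ᵥ a) i = 0 := by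
  simp [mulVec, dotProduct, hJ.2 i _ (Or.inl hi)]

lemma aux_br (n : ℕ) (hn : 4 ≤ n) (A J : Matrix (Fin (n + 1)) (Fin (n + 1)) ℝ)
    (hJ : memSOnm1 n J) (hAskew : Aᵀ = -A)
    (hAperp : ∀ i j : Fin (n + 1),
      (((i : ℕ) < n - 1 ∧ (j : ℕ) < n - 1) ∨ (n - 1 ≤ (i : ℕ) ∧ n - 1 ≤ (j : ℕ))) →
      A i j = 0) (p q : Fin (n+1)) (hp : (p:ℕ) = n - 1) (hq : (q:ℕ) = n) (x : Fin (n+1) → ℝ) :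
    (∀ i : Fin (n+1), (i:ℕ) < n - 1 → (A * J - J * A).mulVec x i =
      - x p * (J *ᵥ (A.col p)) i - x q * (J *ᵥ (A.col q)) i) ∧
    (A * J - J * A).mulVec x p = (J *ᵥ (A.col p)) ⬝ᵥ x := by
  have hpq : p ≠ q := by intro h; rw [h] at hp; omega
  have hA : ∀ i j, A i j = - A j i := fun i j => by
    have := congrFun (congrFun hAskew j) i
    simpa using this
  constructor
  · intro i hi
    rw [sub_mulVec, ← mulVec_mulVec, ← mulVec_mulVec, Pi.sub_apply]
    have h1 : (A *ᵥ (J *ᵥ x)) i = 0 := by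
      rw [mulVec, dotProduct]
      apply Finset.sum_eq_zero
      intro k _
      by_cases hk : (k:ℕ) < n - 1
      · rw [hAperp i k (Or.inl ⟨hi, hk⟩), zero_mul]
      · rw [aux_J n J hJ x k (by omega), mul_zero]
    have h2 : (J *ᵥ (A *ᵥ x)) i = x p * (J *ᵥ (A.col p)) i + x q * (J *ᵥ (A.col q)) i := by
      simp only [mulVec, dotProduct, Finset.mul_sum, ← Finset.sum_add_distrib]
      apply Finset.sum_congr rfl
      intro k _
      by_cases hk : (k:ℕ) < n - 1
      · have : ∑ m, A k m * x m = A k p * x p + A k q * x q := by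
          rw [← Finset.sum_pair (f := fun m => A k m * x m) hpq]
          symm
          apply Finset.sum_subset (Finset.subset_univ _)
          intro m _ hm
          simp only [Finset.mem_insert, Finset.mem_singleton, not_or, Fin.ext_iff] at hm
          rw [hAperp k m (Or.inl ⟨hk, by omega⟩), zero_mul]
        rw [← Finset.mul_sum, this]
        simp only [Matrix.col_apply]
        ring
      · simp [hJ.2 i k (Or.inr (by omega))]
    rw [h1, h2]; ring
  · rw [sub_mulVec, ← mulVec_mulVec, ← mulVec_mulVec, Pi.sub_apply,
      aux_J n J hJ _ p hp.ge, sub_zero]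
    have h1 : (A *ᵥ (J *ᵥ x)) p = - (A.col p ⬝ᵥ (J *ᵥ x)) := by
      rw [mulVec, ← neg_dotProduct]
      congr 1
      ext k
      exact hA p k
    rw [h1, dotProduct_mulVec, ← mulVec_transpose, hJ.1, neg_mulVec, neg_dotProduct, neg_neg]

lemma aux_span (n : ℕ) (hn : 4 ≤ n) {ι : Type*} [Fintype ι]
    (J : ι → Matrix (Fin (n + 1)) (Fin (n + 1)) ℝ)
    (hJspan : ∀ B, memSOnm1 n B → ∃ c : ι → ℝ, B = ∑ α, c α • J α)
    (a : Fin (n+1) → ℝ) (ha : ∀ α, J α *ᵥ a = 0) (j : Fin (n+1)) (hj : (j:ℕ) < n - 1) :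
    a j = 0 := by
  obtain ⟨i, hi, hij⟩ : ∃ i : Fin (n+1), (i:ℕ) < n - 1 ∧ i ≠ j := by
    by_cases h : (j:ℕ) = 0
    · exact ⟨⟨1, by omega⟩, by simp; omega, by intro h'; rw [← h'] at h; simp at h⟩
    · exact ⟨⟨0, by omega⟩, by simp; omega, by intro h'; rw [← h'] at h; simp at h⟩
  have hB : memSOnm1 n (Matrix.single i j (1:ℝ) - Matrix.single j i 1) := by
    constructor
    · simp [Matrix.transpose_single]
    · intro k l h
      have : ¬ (i = k ∧ j = l) := by rintro ⟨rfl, rfl⟩; omega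
      have : ¬ (j = k ∧ i = l) := by rintro ⟨rfl, rfl⟩; omega
      simp [Matrix.single_apply, *]
  obtain ⟨c, hc⟩ := hJspan _ hB
  have : (Matrix.single i j (1:ℝ) - Matrix.single j i 1) *ᵥ a = 0 := by
    rw [hc, Matrix.sum_mulVec]
    simp [Matrix.smul_mulVec, ha]
  have := congrFun this i
  simpa [Matrix.sub_mulVec, Matrix.single_mulVec, hij, Function.update_apply] using this

/-- Let `n ≥ 4`, `u` the Bowl soliton profile (C² on `[0,∞)`,
`u(0) = u'(0) = 0`, `u'' ≥ 0`, satisfying `u''/(1+u'²) + (n−1)u'/r = 1`), `{J_α}` an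
orthonormal basis of `so(n−1)`, `A` skew-symmetric and orthogonal to `so(n−1) ⊕ so(2)`
(equivalently, `A_{ij} = 0` whenever both `i, j ≤ n−1` and whenever both
`i, j ∈ {n, n+1}`), and `c_α ∈ ℝ^{n+1}` with vanishing last two coordinates.  If
`⟨[A, J_α]x + c_α, ν(x)⟩ = 0` for every `x` in some nonempty relatively open subset `U` of
`M = Bowl^{n−1} × ℝ` consisting of points with `x̄ ≠ 0` (with
`ν(x) = (1+u'²)^{−1/2}(u' x̄/|x̄|, −1, 0)`), then `A = 0` and all `c_α = 0`. -/
theorem bowl_bracket_vector_fields_vanish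
    (n : ℕ) (hn : 4 ≤ n)
    (u : ℝ → ℝ)
    (huC2 : ContDiffOn ℝ 2 u (Set.Ici 0))
    (hu0 : u 0 = 0)
    (hu'0 : derivWithin u (Set.Ici 0) 0 = 0)
    (hu'' : ∀ r ≥ (0:ℝ), 0 ≤ derivWithin (derivWithin u (Set.Ici 0)) (Set.Ici 0) r)
    (hODE : ∀ r > (0:ℝ),
      derivWithin (derivWithin u (Set.Ici 0)) (Set.Ici 0) r
          / (1 + (derivWithin u (Set.Ici 0) r) ^ 2)
        + (n - 1 : ℝ) * derivWithin u (Set.Ici 0) r / r = 1)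
    (J : Fin ((n - 1) * (n - 2) / 2) → Matrix (Fin (n + 1)) (Fin (n + 1)) ℝ)
    (hJmem : ∀ α, memSOnm1 n (J α))
    (hJorth : ∀ α β, Matrix.trace (J α * (J β)ᵀ) = if α = β then 1 else 0)
    (hJspan : ∀ B, memSOnm1 n B →
      ∃ c : Fin ((n - 1) * (n - 2) / 2) → ℝ, B = ∑ α, c α • J α)
    (A : Matrix (Fin (n + 1)) (Fin (n + 1)) ℝ)
    (hAskew : Aᵀ = -A)
    (hAperp : ∀ i j : Fin (n + 1),
      (((i : ℕ) < n - 1 ∧ (j : ℕ) < n - 1) ∨ (n - 1 ≤ (i : ℕ) ∧ n - 1 ≤ (j : ℕ))) →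
      A i j = 0)
    (c : Fin ((n - 1) * (n - 2) / 2) → Fin (n + 1) → ℝ)
    (hc : ∀ α, ∀ i : Fin (n + 1), n - 1 ≤ (i : ℕ) → c α i = 0)
    (U : Set (Fin (n + 1) → ℝ))
    (hUsub : U ⊆ bowlTimesR n u)
    (hUxbar : ∀ x ∈ U, 0 < rbar n x)
    (hUrelOpen : ∃ V : Set (Fin (n + 1) → ℝ), IsOpen V ∧ U = V ∩ bowlTimesR n u)
    (hUne : U.Nonempty)
    (hnormal : ∀ x ∈ U, ∀ α,
      (Real.sqrt (1 + (derivWithin u (Set.Ici 0) (rbar n x)) ^ 2))⁻¹ *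
        ((∑ i ∈ Finset.univ.filter (fun i : Fin (n + 1) => (i : ℕ) < n - 1),
            ((A * J α - J α * A).mulVec x i + c α i) *
              (derivWithin u (Set.Ici 0) (rbar n x) * x i / rbar n x))
          - ((A * J α - J α * A).mulVec x ⟨n - 1, by omega⟩ + c α ⟨n - 1, by omega⟩)) = 0) :
    A = 0 ∧ ∀ α, c α = 0 := by
  obtain ⟨H1, H2, Hw⟩ := aux_pos n u huC2 hu'0 hu'' hODE
  set w := derivWithin u (Set.Ici 0) with hwdef
  obtain ⟨V, hV, rfl⟩ := hUrelOpen
  obtain ⟨p, hp⟩ : ∃ p : Fin (n+1), p = ⟨n - 1, by omega⟩ := ⟨_, rfl⟩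
  obtain ⟨q, hq⟩ : ∃ q : Fin (n+1), q = ⟨n, by omega⟩ := ⟨_, rfl⟩
  have hpv : (p:ℕ) = n - 1 := by rw [hp]
  have hqv : (q:ℕ) = n := by rw [hq]
  have hqp : q ≠ p := by intro h; rw [h] at hqv; omega
  set Φ : (Fin (n+1) → ℝ) → (Fin (n+1) → ℝ) := fun y => Function.update y p (u (rbar n y)) with hΦ
  have hucont : Continuous fun y => u (rbar n y) :=
    huC2.continuousOn.comp_continuous (rbar_cont n) (fun y => rbar_nonneg' n y)
  have hΦc : Continuous Φ := continuous_id.update p hucont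
  have hΦlow : ∀ y, ∀ i : Fin (n+1), i ≠ p → Φ y i = y i := fun y i hi => by simp [hΦ, hi]
  have hΦp : ∀ y, Φ y p = u (rbar n y) := fun y => by simp [hΦ]
  have hlt : ∀ i : Fin (n+1), (i:ℕ) < n - 1 → i ≠ p := fun i hi h => by rw [h] at hi; omega
  have hΦr : ∀ y, rbar n (Φ y) = rbar n y := fun y =>
    rbar_congr _ _ _ fun i hi => hΦlow y i (hlt i hi)
  set W := Φ ⁻¹' V with hWdef
  have hW : IsOpen W := hV.preimage hΦc
  have hWU : ∀ y ∈ W, Φ y ∈ V ∩ bowlTimesR n u := fun y hy => ⟨hy, by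
    change Φ y ⟨n - 1, _⟩ = u (rbar n (Φ y))
    rw [← hp, hΦr, hΦp]⟩
  have hWne : W.Nonempty := by
    obtain ⟨x, hx, hx2⟩ := hUne
    refine ⟨x, ?_⟩
    have : Φ x = x := by
      change x ⟨n - 1, _⟩ = u (rbar n x) at hx2
      rw [← hp] at hx2
      simp [hΦ, ← hx2]
    rw [hWdef, Set.mem_preimage, this]; exact hx
  have hWr : ∀ y ∈ W, 0 < rbar n y := fun y hy => hΦr y ▸ hUxbar _ (hWU y hy)
  -- key equation
  have key : ∀ α, ∀ y ∈ W, w (rbar n y) * (c α ⬝ᵥ y - u (rbar n y) * ((J α *ᵥ A.col p) ⬝ᵥ y)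
      - y q * ((J α *ᵥ A.col q) ⬝ᵥ y)) = rbar n y * ((J α *ᵥ A.col p) ⬝ᵥ y) := by
    intro α y hy
    have h := hnormal _ (hWU y hy) α
    have hr := hWr y hy
    rw [hΦr] at h
    have hs : (Real.sqrt (1 + w (rbar n y) ^ 2))⁻¹ ≠ 0 := by positivity
    have h := (mul_eq_zero.mp h).resolve_left hs
    obtain ⟨b1, b2⟩ := aux_br n hn A (J α) (hJmem α) hAskew hAperp p q hpv hqv (Φ y)
    rw [← hp, b2, hc α p hpv.ge, add_zero] at h
    have e0 : (J α *ᵥ A.col p) ⬝ᵥ Φ y = (J α *ᵥ A.col p) ⬝ᵥ y := by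
      rw [← aux_sum n _ _ (aux_J n (J α) (hJmem α) _), ← aux_sum n _ _ (aux_J n (J α) (hJmem α) _)]
      apply Finset.sum_congr rfl
      intro i hi
      rw [hΦlow y i (hlt i (by simpa using hi))]
    have e1 : ∑ i ∈ Finset.univ.filter (fun i : Fin (n + 1) => (i : ℕ) < n - 1),
            ((A * J α - J α * A).mulVec (Φ y) i + c α i) * (w (rbar n y) * Φ y i / rbar n y)
        = w (rbar n y) / rbar n y * (c α ⬝ᵥ y - u (rbar n y) * ((J α *ᵥ A.col p) ⬝ᵥ y)
      - y q * ((J α *ᵥ A.col q) ⬝ᵥ y)) := by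
      rw [← aux_sum n _ _ (hc α), ← aux_sum n _ _ (aux_J n (J α) (hJmem α) _),
        ← aux_sum n _ _ (aux_J n (J α) (hJmem α) _), Finset.mul_sum, Finset.mul_sum,
        ← Finset.sum_sub_distrib, ← Finset.sum_sub_distrib, Finset.mul_sum]
      apply Finset.sum_congr rfl
      intro i hi
      have hi' : (i:ℕ) < n - 1 := by simpa using hi
      rw [b1 i hi', hΦlow y i (hlt i hi'), hΦp, hΦlow y q hqp]
      ring
    rw [e1, e0] at h
    field_simp at h
    linarith
  have hLq : ∀ v : Fin (n+1) → ℝ, (∀ i : Fin (n+1), n - 1 ≤ (i:ℕ) → v i = 0) →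
      ∀ (y : Fin (n+1) → ℝ) (t : ℝ), v ⬝ᵥ (y + t • (Pi.single q (1:ℝ) : Fin (n+1) → ℝ)) = v ⬝ᵥ y := by
    intro v hv y t
    rw [dotProduct_add, dotProduct_smul, dotProduct_single, hv q (by omega)]
    simp
  have hb : ∀ α, J α *ᵥ A.col q = 0 := by
    intro α
    apply aux_lin hW hWne
    intro y hy
    obtain ⟨t, ht, hty⟩ := aux_line' hW hy (Pi.single q (1:ℝ))
    have k1 := key α y hy
    have k2 := key α _ hty
    have hrr : rbar n (y + t • (Pi.single q (1:ℝ) : Fin (n+1) → ℝ)) = rbar n y := by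
      apply rbar_congr
      intro i hi
      have : i ≠ q := by intro h; rw [h] at hi; omega
      simp [this]
    rw [hrr, hLq _ (hc α), hLq _ (aux_J n (J α) (hJmem α) _),
      hLq _ (aux_J n (J α) (hJmem α) _)] at k2
    have hq1 : (y + t • (Pi.single q (1:ℝ) : Fin (n+1) → ℝ)) q = y q + t := by simp
    rw [hq1] at k2
    have hw0 := (Hw _ (hWr y hy)).ne'
    have : w (rbar n y) * t * ((J α *ᵥ A.col q) ⬝ᵥ y) = 0 := by linear_combination k1 - k2
    exact (mul_eq_zero.mp this).resolve_left (mul_ne_zero hw0 ht)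
  have ha' : ∀ α, ∀ y ∈ W, (J α *ᵥ A.col p) ⬝ᵥ y = 0 := by
    intro α y hy
    by_contra hne
    set r := rbar n y with hrdef
    have hr : 0 < r := hWr y hy
    apply aux_ode n hn u w _ H1 H2 Hw hODE r ((c α ⬝ᵥ y) / ((J α *ᵥ A.col p) ⬝ᵥ y)) hr
    have hcont : Filter.Tendsto (fun s : ℝ => s / r - 1) (nhds r) (nhds 0) := by
      have : Continuous fun s : ℝ => s / r - 1 := by fun_prop
      have h := this.tendsto r
      simpa [hr.ne'] using h
    filter_upwards [hcont.eventually (aux_line hW hy y), lt_mem_nhds hr] with s hs hs0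
    have hsy : y + (s / r - 1) • y = (s / r) • y := by rw [sub_smul]; simp
    rw [hsy] at hs
    have k := key α _ hs
    rw [rbar_smul_s5 n _ (by positivity), ← hrdef, div_mul_cancel₀ _ hr.ne', hb α] at k
    simp only [dotProduct_smul, zero_dotProduct, smul_eq_mul] at k
    have hw0 := Hw s hs0
    field_simp at k ⊢
    linarith
  have ha : ∀ α, J α *ᵥ A.col p = 0 := fun α => aux_lin hW hWne _ (ha' α)
  have hc0 : ∀ α, c α = 0 := by
    intro α
    apply aux_lin hW hWne
    intro y hy
    have k := key α y hy
    rw [ha α, hb α] at k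
    simpa [(Hw _ (hWr y hy)).ne'] using k
  refine ⟨?_, hc0⟩
  have hA : ∀ i j, A i j = - A j i := fun i j => by
    have := congrFun (congrFun hAskew j) i
    simpa using this
  have hAz : ∀ i j : Fin (n+1), (i:ℕ) < n - 1 → n - 1 ≤ (j:ℕ) → A i j = 0 := by
    intro i j hi hj
    have : j = p ∨ j = q := by
      rw [Fin.ext_iff, Fin.ext_iff]; omega
    rcases this with rfl | rfl
    · exact aux_span n hn J hJspan _ ha i hi
    · exact aux_span n hn J hJspan _ hb i hi
  ext i j
  rw [Matrix.zero_apply]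
  rcases lt_or_ge (i:ℕ) (n-1) with hi | hi <;> rcases lt_or_ge (j:ℕ) (n-1) with hj | hj
  · exact hAperp i j (Or.inl ⟨hi, hj⟩)
  · exact hAz i j hi hj
  · rw [hA, hAz j i hj hi, neg_zero]
  · exact hAperp i j (Or.inr ⟨hi, hj⟩)
end

section
/- Under the stated hypotheses on the Bowl soliton profile φ, one has φ'(r) ≥ r/n for every r ≥ 0. -/
/-- For the Bowl soliton profile `φ` (C² on `[0,∞)`, with `φ(0) = φ'(0) = 0`,
`φ'' ≥ 0`, satisfying `φ''/(1+φ'²) + (n−1)φ'/r = 1` for `r > 0`), one has `φ'(r) ≥ r/n`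
for every `r ≥ 0`. Derivatives on `[0,∞)` are taken as `derivWithin _ (Set.Ici 0)`. -/
theorem bowl_profile_deriv_lower_bound
    (n : ℕ) (hn : 2 ≤ n) (φ : ℝ → ℝ)
    (hC2 : ContDiffOn ℝ 2 φ (Set.Ici 0))
    (h0 : φ 0 = 0)
    (h0' : derivWithin φ (Set.Ici 0) 0 = 0)
    (hconvex : ∀ r ≥ (0:ℝ), 0 ≤ derivWithin (derivWithin φ (Set.Ici 0)) (Set.Ici 0) r)
    (hODE : ∀ r > (0:ℝ),
      derivWithin (derivWithin φ (Set.Ici 0)) (Set.Ici 0) r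
          / (1 + (derivWithin φ (Set.Ici 0) r) ^ 2)
        + (n - 1 : ℝ) * derivWithin φ (Set.Ici 0) r / r = 1) :
    ∀ r ≥ (0:ℝ), derivWithin φ (Set.Ici 0) r ≥ r / n := by
  obtain ⟨k, rfl⟩ : ∃ k, n = k + 2 := ⟨n - 2, by omega⟩
  set u := derivWithin φ (Set.Ici 0) with hu
  have huC : ContDiffOn ℝ 1 u (Set.Ici 0) :=
    hC2.derivWithin (uniqueDiffOn_Ici 0) (by norm_num)
  have hcont : ContinuousOn u (Set.Ici 0) := huC.continuousOn
  have hder : ∀ r > (0:ℝ), HasDerivAt u (derivWithin u (Set.Ici 0) r) r := by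
    intro r hr
    exact ((huC.differentiableOn (by norm_num) r hr.le).hasDerivWithinAt).hasDerivAt
      (Ici_mem_nhds hr)
  have hF : ∀ r > (0:ℝ), HasDerivAt (fun r => r ^ (k + 1) * u r - r ^ (k + 2) / ((k : ℝ) + 2))
      ((((k + 1 : ℕ) : ℝ) * r ^ k) * u r + r ^ (k + 1) * derivWithin u (Set.Ici 0) r
        - (((k + 2 : ℕ) : ℝ) * r ^ (k + 1)) / ((k : ℝ) + 2)) r := by
    intro r hr
    exact ((hasDerivAt_pow (k + 1) r).mul (hder r hr)).sub
      ((hasDerivAt_pow (k + 2) r).div_const _)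
  have hmono : MonotoneOn (fun r => r ^ (k + 1) * u r - r ^ (k + 2) / ((k : ℝ) + 2))
      (Set.Ici 0) := by
    apply monotoneOn_of_deriv_nonneg (convex_Ici 0)
    · exact ((continuous_pow (k + 1)).continuousOn.mul hcont).sub
        ((continuous_pow (k + 2)).div_const _).continuousOn
    · intro r hr
      rw [interior_Ici] at hr
      exact (hF r hr).differentiableAt.differentiableWithinAt
    · intro r hr
      rw [interior_Ici] at hr
      have hr' : (0:ℝ) < r := hr
      rw [(hF r hr).deriv]
      have h1 := hODE r hr
      have h2 := hconvex r hr'.le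
      have h3 : derivWithin u (Set.Ici 0) r / (1 + (u r) ^ 2) ≤ derivWithin u (Set.Ici 0) r :=
        div_le_self h2 (by nlinarith [sq_nonneg (u r)])
      have h4 : 0 ≤ derivWithin u (Set.Ici 0) r + ((k : ℝ) + 1) * u r / r - 1 := by
        have h5 : (((k + 2 : ℕ) : ℝ) - 1) = (k : ℝ) + 1 := by push_cast; ring
        rw [h5] at h1
        linarith
      have h6 := mul_nonneg (pow_pos hr' (k + 1)).le h4
      have h7 : (k : ℝ) + 2 ≠ 0 := by positivity
      refine le_of_le_of_eq h6 ?_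
      have h8 : r ≠ 0 := hr'.ne'
      generalize derivWithin u (Set.Ici 0) r = w
      generalize u r = v
      push_cast
      field_simp
      ring
  intro r hr
  rcases hr.eq_or_lt with h | h
  · rw [← h, h0']; simp
  · have h1 := hmono (Set.mem_Ici.2 le_rfl) (Set.mem_Ici.2 hr) hr
    simp only [h0'] at h1
    simp at h1
    have h2 : r ^ (k + 1) * (r / ((k : ℝ) + 2)) ≤ r ^ (k + 1) * u r := by
      refine le_trans (le_of_eq ?_) h1
      ring
    have h3 := le_of_mul_le_mul_left h2 (pow_pos h (k + 1))
    push_cast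
    exact h3
end

section
/- Under the stated hypotheses on the Bowl soliton profile φ, one has φ(r) ≥ r²/(2n) for every r ≥ 0. -/
/-- For the Bowl soliton profile `φ` (C² on `[0,∞)`, with `φ(0) = φ'(0) = 0`,
`φ'' ≥ 0`, satisfying `φ''/(1+φ'²) + (n−1)φ'/r = 1` for `r > 0`), one has `φ(r) ≥ r²/(2n)`
for every `r ≥ 0`. Derivatives on `[0,∞)` are taken as `derivWithin _ (Set.Ici 0)`. -/
theorem bowl_profile_lower_bound
    (n : ℕ) (hn : 2 ≤ n) (φ : ℝ → ℝ)
    (hC2 : ContDiffOn ℝ 2 φ (Set.Ici 0))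
    (h0 : φ 0 = 0)
    (h0' : derivWithin φ (Set.Ici 0) 0 = 0)
    (hconvex : ∀ r ≥ (0:ℝ), 0 ≤ derivWithin (derivWithin φ (Set.Ici 0)) (Set.Ici 0) r)
    (hODE : ∀ r > (0:ℝ),
      derivWithin (derivWithin φ (Set.Ici 0)) (Set.Ici 0) r
          / (1 + (derivWithin φ (Set.Ici 0) r) ^ 2)
        + (n - 1 : ℝ) * derivWithin φ (Set.Ici 0) r / r = 1) :
    ∀ r ≥ (0:ℝ), φ r ≥ r ^ 2 / (2 * n) := by
  set u := derivWithin φ (Set.Ici 0) with hu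
  have hU : ContDiffOn ℝ 1 u (Set.Ici 0) :=
    hC2.derivWithin (uniqueDiffOn_Ici 0) (by norm_num)
  have hφd : ∀ r > (0:ℝ), HasDerivAt φ (u r) r := fun r hr =>
    ((hC2.differentiableOn (by norm_num)) r hr.le).hasDerivWithinAt.hasDerivAt (Ici_mem_nhds hr)
  have hud : ∀ r > (0:ℝ), HasDerivAt u (derivWithin u (Set.Ici 0) r) r := fun r hr =>
    ((hU.differentiableOn (by norm_num)) r hr.le).hasDerivWithinAt.hasDerivAt (Ici_mem_nhds hr)
  obtain ⟨m, rfl⟩ : ∃ m, n = m + 2 := ⟨n - 2, by omega⟩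
  have hmpos : (0:ℝ) < (m:ℝ) + 2 := by positivity
  have hmono : MonotoneOn (fun r : ℝ => r ^ (m+1) * u r - r ^ (m+2) / ((m:ℝ)+2)) (Set.Ici 0) := by
    apply monotoneOn_of_hasDerivWithinAt_nonneg (convex_Ici 0)
      (f' := fun r => (((m+1:ℕ):ℝ) * r ^ m * u r + r ^ (m+1) * derivWithin u (Set.Ici 0) r)
        - ((m+2:ℕ):ℝ) * r ^ (m+1) / ((m:ℝ)+2))
    · exact ((continuous_pow _).continuousOn.mul hU.continuousOn).sub
        (by fun_prop)
    · intro r hr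
      rw [interior_Ici] at hr
      exact (((hasDerivAt_pow (m+1) r).mul (hud r hr)).sub
        ((hasDerivAt_pow (m+2) r).div_const _)).hasDerivWithinAt
    · intro r hr
      rw [interior_Ici] at hr
      have hr' : 0 < r := hr
      have h1 := hODE r hr
      have h2 := hconvex r hr'.le
      have h3 : derivWithin u (Set.Ici 0) r / (1 + u r ^ 2) ≤ derivWithin u (Set.Ici 0) r :=
        div_le_self h2 (by nlinarith [sq_nonneg (u r)])
      push_cast at h1 ⊢
      have h4 : 1 - ((m:ℝ) + 2 - 1) * u r / r ≤ derivWithin u (Set.Ici 0) r := by linarith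
      have h5 : r ≤ ((m:ℝ) + 1) * u r + r * derivWithin u (Set.Ici 0) r := by
        have := mul_le_mul_of_nonneg_left h4 hr'.le
        have e : r * (1 - ((m:ℝ) + 2 - 1) * u r / r) = r - ((m:ℝ)+1) * u r := by
          field_simp
          ring
        linarith
      have h6 := mul_le_mul_of_nonneg_left h5 (pow_pos hr' m).le
      rw [mul_div_assoc]
      have e : ((m:ℝ)+2) * (r^(m+1) / ((m:ℝ)+2)) = r^m * r := by
        field_simp
        ring
      rw [e]
      rw [pow_succ]
      linarith
  have hkey : ∀ r > (0:ℝ), r / ((m:ℝ)+2) ≤ u r := by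
    intro r hr
    have h := hmono (Set.mem_Ici.2 le_rfl) (Set.mem_Ici.2 hr.le) hr.le
    simp at h
    have e : r ^ (m+2) / ((m:ℝ)+2) = r ^ (m+1) * (r / ((m:ℝ)+2)) := by ring
    rw [e] at h
    exact le_of_mul_le_mul_left h (pow_pos hr _)
  have hmono2 : MonotoneOn (fun r : ℝ => φ r - r ^ 2 / (2 * ((m:ℝ)+2))) (Set.Ici 0) := by
    apply monotoneOn_of_hasDerivWithinAt_nonneg (convex_Ici 0)
      (f' := fun r => u r - ((2:ℕ):ℝ) * r ^ 1 / (2 * ((m:ℝ)+2)))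
    · exact hC2.continuousOn.sub (by fun_prop)
    · intro r hr
      rw [interior_Ici] at hr
      exact ((hφd r hr).sub ((hasDerivAt_pow 2 r).div_const _)).hasDerivWithinAt
    · intro r hr
      rw [interior_Ici] at hr
      have := hkey r hr
      have e : ((2:ℕ):ℝ) * r ^ 1 / (2 * ((m:ℝ)+2)) = r / ((m:ℝ)+2) := by
        push_cast
        field_simp
      rw [e]
      linarith
  intro r hr
  have h := hmono2 (Set.mem_Ici.2 le_rfl) (Set.mem_Ici.2 hr) hr
  simp [h0] at h
  push_cast
  exact h
end

section
/- Under the stated hypotheses on the Bowl soliton profile φ, for every r > 0 one has 1/√(1 + φ'(r)²) < n/r. (That is, the mean curvature of the Bowl soliton at a point at distance r from its rotation axis is strictly less than n/r.) -/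
/-- For the Bowl soliton profile `φ` (C² on `[0,∞)`, with `φ(0) = φ'(0) = 0`,
`φ'' ≥ 0`, satisfying `φ''/(1+φ'²) + (n−1)φ'/r = 1` for `r > 0`), the mean curvature
`1/√(1+φ'(r)²)` is strictly less than `n/r` for every `r > 0`. -/
theorem bowl_mean_curvature_upper_bound
    (n : ℕ) (hn : 2 ≤ n) (φ : ℝ → ℝ)
    (hC2 : ContDiffOn ℝ 2 φ (Set.Ici 0))
    (h0 : φ 0 = 0)
    (h0' : derivWithin φ (Set.Ici 0) 0 = 0)
    (hconvex : ∀ r ≥ (0:ℝ), 0 ≤ derivWithin (derivWithin φ (Set.Ici 0)) (Set.Ici 0) r)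
    (hODE : ∀ r > (0:ℝ),
      derivWithin (derivWithin φ (Set.Ici 0)) (Set.Ici 0) r
          / (1 + (derivWithin φ (Set.Ici 0) r) ^ 2)
        + (n - 1 : ℝ) * derivWithin φ (Set.Ici 0) r / r = 1) :
    ∀ r > (0:ℝ), 1 / Real.sqrt (1 + (derivWithin φ (Set.Ici 0) r) ^ 2) < n / r := by
  obtain ⟨k, rfl⟩ : ∃ k, n = k + 2 := ⟨n - 2, by omega⟩
  set u := derivWithin φ (Set.Ici 0) with hu
  have hC1 : ContDiffOn ℝ 1 u (Set.Ici 0) :=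
    hC2.derivWithin (uniqueDiffOn_Ici 0) (by norm_num)
  have hcont : ContinuousOn u (Set.Ici 0) := hC1.continuousOn
  have hder : ∀ r > (0:ℝ), HasDerivAt u (derivWithin u (Set.Ici 0) r) r := by
    intro r hr
    exact ((hC1.differentiableOn (by norm_num)) r hr.le).hasDerivWithinAt.hasDerivAt
      (Ici_mem_nhds hr)
  have hW : ∀ r > (0:ℝ), HasDerivAt (fun r : ℝ => r ^ (k+1) * (u r - r / (k + 2)))
      (((k + 1 : ℕ) : ℝ) * r ^ k * (u r - r / (k + 2))
        + r ^ (k+1) * (derivWithin u (Set.Ici 0) r - 1 / (k + 2))) r := by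
    intro r hr
    exact (hasDerivAt_pow (k+1) r).mul ((hder r hr).sub ((hasDerivAt_id r).div_const _))
  have hmono : MonotoneOn (fun r : ℝ => r ^ (k+1) * (u r - r / (k + 2))) (Set.Ici 0) := by
    apply monotoneOn_of_deriv_nonneg (convex_Ici 0)
    · fun_prop
    · intro r hr
      rw [interior_Ici] at hr
      exact (hW r hr).differentiableAt.differentiableWithinAt
    · intro r hr
      rw [interior_Ici] at hr
      have hr : 0 < r := hr
      rw [(hW r hr).deriv]
      have h1 := hODE r hr
      have h2 := hconvex r hr.le
      set a := derivWithin u (Set.Ici 0) r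
      have h3 : a / (1 + u r ^ 2) ≤ a := div_le_self h2 (by nlinarith [sq_nonneg (u r)])
      have h4 : (((k + 1 : ℕ) : ℝ) * r ^ k * (u r - r / (k + 2))
        + r ^ (k+1) * (a - 1 / (k + 2))) = r ^ (k+1) * (a - 1 + (k+1) * u r / r) := by
        have : (k:ℝ) + 2 ≠ 0 := by positivity
        push_cast
        field_simp
        ring
      rw [h4]
      have h5 : ((k:ℝ)+1) * u r / r = 1 - a / (1 + u r ^ 2) := by
        rw [eq_sub_iff_add_eq, add_comm]
        refine Eq.trans ?_ h1
        push_cast; ring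
      rw [h5]
      exact mul_nonneg (by positivity) (by linarith)
  intro r hr
  have h := hmono (Set.mem_Ici.2 le_rfl) (Set.mem_Ici.2 hr.le) hr.le
  simp only [h0', zero_div, sub_zero, mul_zero] at h
  have h6 : 0 ≤ u r - r / (k + 2) := nonneg_of_mul_nonneg_right h (by positivity)
  have h7 : u r < Real.sqrt (1 + u r ^ 2) := Real.lt_sqrt_of_sq_lt (by linarith)
  have h8 : 0 < Real.sqrt (1 + u r ^ 2) := Real.sqrt_pos.2 (by positivity)
  rw [div_lt_div_iff₀ h8 hr]
  have h9 : r / (k + 2) < Real.sqrt (1 + u r ^ 2) := by linarith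
  rw [div_lt_iff₀ (by positivity)] at h9
  push_cast
  linarith
end

section
/- Under the stated hypotheses on the Bowl soliton profile φ, let J be a skew-symmetric real (n+1)×(n+1) matrix with Tr(J Jᵀ) = 1 whose entries vanish outside the top-left (n−1)×(n−1) block. Then for every x ∈ ℝⁿ, the point p = (x, φ(|x|)) ∈ ℝ^{n+1} satisfies |J p| · (1 + φ'(|x|)²)^{−1/2} < 2n. (That is, |J| H < 2n on the Bowl soliton, where H is its mean curvature.) -/
open Matrix

theorem bowl_aux_slope (m : ℕ) (φ : ℝ → ℝ)
    (hC2 : ContDiffOn ℝ 2 φ (Set.Ici 0))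
    (hconvex : ∀ r ≥ (0:ℝ), 0 ≤ derivWithin (derivWithin φ (Set.Ici 0)) (Set.Ici 0) r)
    (hODE : ∀ r > (0:ℝ),
      derivWithin (derivWithin φ (Set.Ici 0)) (Set.Ici 0) r
          / (1 + (derivWithin φ (Set.Ici 0) r) ^ 2)
        + ((m:ℝ) + 1) * derivWithin φ (Set.Ici 0) r / r = 1)
    (r : ℝ) (hr : 0 ≤ r) : r ^ (m+2) / (m+2) ≤ r ^ (m+1) * derivWithin φ (Set.Ici 0) r := by
  have hu : ContDiffOn ℝ 1 (derivWithin φ (Set.Ici 0)) (Set.Ici 0) :=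
    hC2.derivWithin (uniqueDiffOn_Ici 0) (by norm_num)
  have hud : ∀ t > (0:ℝ), HasDerivAt (derivWithin φ (Set.Ici 0))
      (derivWithin (derivWithin φ (Set.Ici 0)) (Set.Ici 0) t) t := fun t ht =>
    ((hu.differentiableOn (by norm_num)) t ht.le).hasDerivWithinAt.hasDerivAt (Ici_mem_nhds ht)
  generalize derivWithin φ (Set.Ici 0) = u at *
  generalize derivWithin u (Set.Ici 0) = v at *
  have hd : ∀ t > (0:ℝ), HasDerivAt (fun t => t ^ (m+1) * u t - t ^ (m+2) / ((m:ℝ)+2))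
      ((m+1) * t ^ m * u t + t ^ (m+1) * v t - t ^ (m+1)) t := by
    intro t ht
    have h := ((hasDerivAt_pow (m+1) t).mul (hud t ht)).sub
      ((hasDerivAt_pow (m+2) t).div_const ((m:ℝ)+2))
    refine h.congr_deriv ?_
    have : (m:ℝ) + 2 ≠ 0 := by positivity
    push_cast
    field_simp
  have hmono : MonotoneOn (fun t => t ^ (m+1) * u t - t ^ (m+2) / ((m:ℝ)+2)) (Set.Ici 0) := by
    apply monotoneOn_of_deriv_nonneg (convex_Ici 0)
    · have := hu.continuousOn
      fun_prop
    · intro t ht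
      rw [interior_Ici] at ht
      exact (hd t ht).differentiableAt.differentiableWithinAt
    · intro t ht
      rw [interior_Ici] at ht
      have ht : 0 < t := ht
      rw [(hd t ht).deriv]
      have h1 := hODE t ht
      have h2 : v t / (1 + u t ^ 2) ≤ v t := div_le_self (hconvex t ht.le) (by nlinarith [sq_nonneg (u t)])
      have h3 : 1 ≤ v t + ((m:ℝ) + 1) * u t / t := by linarith
      have h4 := mul_le_mul_of_nonneg_left h3 (pow_pos ht (m+1)).le
      have h5 : t ^ (m+1) * (v t + ((m:ℝ) + 1) * u t / t)
        = (m+1) * t ^ m * u t + t ^ (m+1) * v t := by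
        field_simp
        ring
      linarith
  have := hmono (Set.mem_Ici.2 le_rfl) (Set.mem_Ici.2 hr) hr
  simp at this
  exact this

theorem bowl_aux_mat (n : ℕ) (J : Matrix (Fin (n+1)) (Fin (n+1)) ℝ)
    (hnorm : Matrix.trace (J * Jᵀ) = 1)
    (hblock : ∀ i j : Fin (n+1), (n - 1 ≤ (i : ℕ) ∨ n - 1 ≤ (j : ℕ)) → J i j = 0)
    (x : Fin n → ℝ) (c : ℝ) :
    ∑ i : Fin (n+1), (J.mulVec (fun i : Fin (n+1) =>
          if h : (i : ℕ) < n then x ⟨i, h⟩ else c) i) ^ 2 ≤ ∑ j : Fin n, (x j) ^ 2 := by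
  have hJ : ∑ i, ∑ j, J i j ^ 2 = 1 := by
    rw [← hnorm]
    simp [Matrix.trace, Matrix.mul_apply, sq]
  calc _ ≤ ∑ i : Fin (n+1), (∑ j, J i j ^ 2) * ∑ j : Fin n, (x j) ^ 2 := by
        apply Finset.sum_le_sum
        intro i _
        have hl : J i (Fin.last n) = 0 := hblock _ _ (Or.inr (by simp))
        simp only [Matrix.mulVec, dotProduct, Fin.sum_univ_castSucc, hl]
        simpa using Finset.sum_mul_sq_le_sq_mul_sq Finset.univ (fun j : Fin n => J i j.castSucc) x
    _ = _ := by rw [← Finset.sum_mul, hJ, one_mul]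

/-- Let `φ` be the Bowl soliton profile (C² on `[0,∞)`, `φ(0) = φ'(0) = 0`,
`φ'' ≥ 0`, `φ''/(1+φ'²) + (n−1)φ'/r = 1` for `r > 0`), and let `J` be a skew-symmetric
real `(n+1)×(n+1)` matrix with `Tr(J Jᵀ) = 1` whose entries vanish outside the top-left
`(n−1)×(n−1)` block. Then for every `x ∈ ℝⁿ`, the point `p = (x, φ(|x|))` satisfies
`|J p| · (1 + φ'(|x|)²)^{−1/2} < 2n`, i.e. `|J| H < 2n` on the Bowl soliton. -/
theorem bowl_rotation_field_bound
    (n : ℕ) (hn : 2 ≤ n) (φ : ℝ → ℝ)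
    (hC2 : ContDiffOn ℝ 2 φ (Set.Ici 0))
    (h0 : φ 0 = 0)
    (h0' : derivWithin φ (Set.Ici 0) 0 = 0)
    (hconvex : ∀ r ≥ (0:ℝ), 0 ≤ derivWithin (derivWithin φ (Set.Ici 0)) (Set.Ici 0) r)
    (hODE : ∀ r > (0:ℝ),
      derivWithin (derivWithin φ (Set.Ici 0)) (Set.Ici 0) r
          / (1 + (derivWithin φ (Set.Ici 0) r) ^ 2)
        + (n - 1 : ℝ) * derivWithin φ (Set.Ici 0) r / r = 1)
    (J : Matrix (Fin (n+1)) (Fin (n+1)) ℝ)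
    (hskew : Jᵀ = -J)
    (hnorm : Matrix.trace (J * Jᵀ) = 1)
    (hblock : ∀ i j : Fin (n+1), (n - 1 ≤ (i : ℕ) ∨ n - 1 ≤ (j : ℕ)) → J i j = 0)
    (x : Fin n → ℝ) :
    Real.sqrt (∑ i : Fin (n+1),
        (J.mulVec (fun i : Fin (n+1) =>
          if h : (i : ℕ) < n then x ⟨i, h⟩
          else φ (Real.sqrt (∑ j : Fin n, (x j) ^ 2))) i) ^ 2) *
      (Real.sqrt (1 +
        (derivWithin φ (Set.Ici 0) (Real.sqrt (∑ j : Fin n, (x j) ^ 2))) ^ 2))⁻¹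
      < 2 * n := by
  have hm := bowl_aux_mat n J hnorm hblock x (φ (Real.sqrt (∑ j : Fin n, (x j) ^ 2)))
  have hS : 0 ≤ ∑ j : Fin n, (x j) ^ 2 := Finset.sum_nonneg fun j _ => sq_nonneg _
  have hle := Real.sqrt_le_sqrt hm
  obtain ⟨m, rfl⟩ : ∃ m, n = m + 2 := ⟨n - 2, by omega⟩
  set r := Real.sqrt (∑ j : Fin (m+2), (x j) ^ 2) with hrdef
  have hr : 0 ≤ r := Real.sqrt_nonneg _
  have hs := bowl_aux_slope m φ hC2 hconvex (by
    intro t ht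
    have := hODE t ht
    push_cast at this
    rw [show (m:ℝ) + 2 - 1 = m + 1 by ring] at this
    exact this) r hr
  set u := derivWithin φ (Set.Ici 0) r
  have hpos : 0 < Real.sqrt (1 + u ^ 2) := Real.sqrt_pos.2 (by positivity)
  rw [← div_eq_mul_inv, div_lt_iff₀ hpos]
  refine lt_of_le_of_lt hle ?_
  push_cast
  have hN : (0:ℝ) < (m:ℝ) + 2 := by positivity
  have key : r ≤ (m + 2) * Real.sqrt (1 + u ^ 2) := by
    rcases hr.eq_or_lt with h | h
    · rw [← h]; positivity
    · have h1 : r / (m + 2) ≤ u := by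
        refine le_of_mul_le_mul_left ?_ (pow_pos h (m+1))
        refine le_trans (le_of_eq ?_) hs
        ring
      have h2 : u ≤ Real.sqrt (1 + u ^ 2) := Real.le_sqrt_of_sq_le (by linarith)
      rw [div_le_iff₀ hN] at h1
      nlinarith
  nlinarith [mul_pos hN hpos]
end

section
/- Let f : ℝ → ℝ be concave on the interval [−1, 1] and satisfy 0 ≤ f(t) ≤ 2 for all t ∈ [−1, 1]. Then the length of the graph of f over [−1, 1], i.e. the total variation of the map t ↦ (t, f(t)) on [−1, 1], is at most 6. -/
/-- If `f : ℝ → ℝ` is concave on `[−1,1]` with `0 ≤ f ≤ 2` there, then the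
length of the graph of `f` over `[−1,1]` (the total variation of `t ↦ (t, f t)`, with the
Euclidean norm on ℝ²) is at most 6; equivalently, every partition sum is at most 6. -/
theorem concave_graph_length_le_six
    (f : ℝ → ℝ)
    (hconc : ConcaveOn ℝ (Set.Icc (-1 : ℝ) 1) f)
    (hf0 : ∀ t ∈ Set.Icc (-1 : ℝ) 1, 0 ≤ f t)
    (hf2 : ∀ t ∈ Set.Icc (-1 : ℝ) 1, f t ≤ 2) :
    ∀ (m : ℕ) (t : ℕ → ℝ), 0 < m → t 0 = -1 → t m = 1 →
      (∀ j < m, t j < t (j + 1)) →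
      ∑ j ∈ Finset.range m,
          Real.sqrt ((t (j + 1) - t j) ^ 2 + (f (t (j + 1)) - f (t j)) ^ 2) ≤ 6 := by
  intro m t hm h0 h1 hlt
  have hmono : ∀ j, ∀ i ≤ j, j ≤ m → t i ≤ t j := by
    intro j
    induction j with
    | zero => intro i hi _; rw [Nat.le_zero.mp hi]
    | succ n ih =>
      intro i hi hn
      rcases Nat.lt_or_ge i (n + 1) with h | h
      · exact (ih i (by omega) (by omega)).trans (hlt n (by omega)).le
      · rw [le_antisymm hi h]
  have hmem : ∀ j ≤ m, t j ∈ Set.Icc (-1 : ℝ) 1 := by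
    intro j hj
    exact ⟨h0 ▸ hmono j 0 (Nat.zero_le _) hj, h1 ▸ hmono m j hj le_rfl⟩
  obtain ⟨k, hk, hmax⟩ := Finset.exists_max_image (Finset.range (m + 1)) (fun j => f (t j))
    ⟨0, by simp⟩
  have hk : k ≤ m := by simpa [Nat.lt_succ_iff] using hk
  have hmax : ∀ j ≤ m, f (t j) ≤ f (t k) := fun j hj => hmax j (by simp; omega)
  have hq : ∀ a b c, a ≤ b → b ≤ c → c ≤ m → min (f (t a)) (f (t c)) ≤ f (t b) := by
    intro a b c hab hbc hc
    exact hconc.min_le_of_mem_Icc (hmem a (by omega)) (hmem c hc)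
      ⟨hmono b a hab (by omega), hmono c b hbc hc⟩
  let g : ℕ → ℝ := fun j => t j + if j ≤ k then f (t j) else 2 * f (t k) - f (t j)
  have hstep : ∀ j ∈ Finset.range m,
      Real.sqrt ((t (j + 1) - t j) ^ 2 + (f (t (j + 1)) - f (t j)) ^ 2) ≤ g (j + 1) - g j := by
    intro j hj
    have hj : j < m := by simpa using hj
    have ht := hlt j hj
    have key : |f (t (j + 1)) - f (t j)| ≤ g (j + 1) - g j - (t (j + 1) - t j) := by
      rcases Nat.lt_or_ge j k with h | h
      · have e1 : j + 1 ≤ k := h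
        have e2 : j ≤ k := h.le
        have := hq j (j + 1) k (by omega) h hk
        rw [min_eq_left (hmax j hj.le)] at this
        simp only [g, e1, e2, if_true]
        rw [abs_of_nonneg (by linarith)]
        linarith
      · have e1 : ¬ (j + 1 ≤ k) := by omega
        have := hq k j (j + 1) h (by omega) hj
        rw [min_eq_right (hmax (j + 1) hj)] at this
        rw [abs_of_nonpos (by linarith)]
        simp only [g, e1, if_false]
        split_ifs with e2
        · have : j = k := by omega
          subst this
          linarith
        · linarith
    have : Real.sqrt ((t (j + 1) - t j) ^ 2 + (f (t (j + 1)) - f (t j)) ^ 2)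
        ≤ (t (j + 1) - t j) + |f (t (j + 1)) - f (t j)| := by
      apply Real.sqrt_le_iff.mpr
      have hn := abs_nonneg (f (t (j + 1)) - f (t j))
      refine ⟨by linarith, ?_⟩
      have hs := sq_abs (f (t (j + 1)) - f (t j))
      have := mul_nonneg (sub_pos.mpr ht).le hn
      rw [← hs]
      linarith [add_sq (t (j + 1) - t j) |f (t (j + 1)) - f (t j)|]
    linarith
  refine (Finset.sum_le_sum hstep).trans ?_
  rw [Finset.sum_range_sub]
  have a0 := hf0 _ (hmem 0 hm.le)
  have am := hf0 _ (hmem m le_rfl)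
  have ak := hf2 _ (hmem k hk)
  have am2 := hmax m le_rfl
  simp only [g, Nat.zero_le, if_true]
  split_ifs <;> linarith
end

section
/- Let n ≥ 2 and let K be a nonempty compact convex subset of ℝⁿ. Then for any two points x, y in the topological boundary (frontier) of K, there exists a continuous path γ : [0, 1] → ℝⁿ with γ(0) = x, γ(1) = y, whose image is contained in the frontier of K, and whose length (total variation) is at most 3 · diam(K). In other words, the intrinsic diameter of the boundary of a compact convex body is at most three times its extrinsic diameter. -/
def Reach {E : Type*} [PseudoEMetricSpace E] (S : Set E) (a b : E) (l : ℝ) : Prop :=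
  0 ≤ l ∧ ∃ c : ℝ → E, LipschitzWith 1 c ∧ c 0 = a ∧ c l = b ∧ ∀ t, c t ∈ S

theorem Reach.trans {E : Type*} [PseudoMetricSpace E] {S : Set E} {a b d : E} {l m : ℝ}
    (h1 : Reach S a b l) (h2 : Reach S b d m) : Reach S a d (l + m) := by
  obtain ⟨hl, c, hc, c0, cl, cS⟩ := h1
  obtain ⟨hm, e, he, e0, em, eS⟩ := h2
  have hc' : ∀ s t, dist (c s) (c t) ≤ |s - t| := fun s t => by
    simpa [Real.dist_eq] using hc.dist_le_mul s t
  have he' : ∀ s t, dist (e s) (e t) ≤ |s - t| := fun s t => by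
    simpa [Real.dist_eq] using he.dist_le_mul s t
  have hce : ∀ s t, s ≤ l → l < t → dist (c s) (e (t - l)) ≤ |s - t| := by
    intro s t hs ht
    have h1 := dist_triangle (c s) (c l) (e (t - l))
    have h2 := hc' s l
    have h3 := he' 0 (t - l)
    rw [cl] at h1 h2
    rw [e0] at h3
    rw [abs_of_nonpos (by linarith)] at h2 h3 ⊢
    linarith
  refine ⟨by linarith, fun t => if t ≤ l then c t else e (t - l), ?_, ?_, ?_, ?_⟩
  · refine LipschitzWith.of_dist_le_mul fun s t => ?_
    simp only [NNReal.coe_one, one_mul, Real.dist_eq]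
    split_ifs with h1 h2 h2
    · exact hc' s t
    · exact hce s t h1 (not_le.1 h2)
    · rw [dist_comm, abs_sub_comm]
      exact hce t s h2 (not_le.1 h1)
    · simpa using he' (s - l) (t - l)
  · simp [hl, c0]
  · dsimp only
    split_ifs with h
    · have : m = 0 := by linarith
      subst this
      simp [cl, ← em, e0]
    · simp [em]
  · intro t
    dsimp only
    split_ifs
    exacts [cS _, eS _]

theorem Reach.seg {E : Type*} [NormedAddCommGroup E] [NormedSpace ℝ E] {S : Set E} {a b : E} {l : ℝ}
    (h : ‖b - a‖ ≤ l) (hS : ∀ t : ℝ, 0 ≤ t → t ≤ 1 → a + t • (b - a) ∈ S) : Reach S a b l := by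
  have hl : 0 ≤ l := (norm_nonneg _).trans h
  refine ⟨hl, fun t => a + (max 0 (min (t / l) 1)) • (b - a), ?_, by simp, ?_, fun t => hS _ (by simp) (by simp)⟩
  · refine LipschitzWith.of_dist_le_mul fun s t => ?_
    simp only [NNReal.coe_one, one_mul, Real.dist_eq, dist_add_left]
    rw [dist_eq_norm, ← sub_smul, norm_smul, Real.norm_eq_abs]
    have h1 : |max 0 (min (s / l) 1) - max 0 (min (t / l) 1)| ≤ |s / l - t / l| := by
      refine (abs_max_sub_max_le_max _ _ _ _).trans ?_
      simp only [sub_self, abs_zero]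
      refine max_le (abs_nonneg _) ((abs_min_sub_min_le_max _ _ _ _).trans ?_)
      simp
    rcases hl.eq_or_lt with rfl | hl
    · have : ‖b - a‖ = 0 := le_antisymm h (norm_nonneg _)
      simp [this]
    · calc _ ≤ |s / l - t / l| * l := by gcongr
        _ = _ := by rw [← sub_div, abs_div, abs_of_pos hl]; field_simp
  · rcases hl.eq_or_lt with rfl | hl
    · have : ‖b - a‖ = 0 := le_antisymm h (norm_nonneg _)
      have := norm_eq_zero.1 this
      simp [sub_eq_zero.1 this]
    · simp [hl.ne']

theorem Reach.mono {E : Type*} [NormedAddCommGroup E] [NormedSpace ℝ E] {S : Set E} {a b : E} {l m : ℝ}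
    (h : Reach S a b l) (hm : l ≤ m) : Reach S a b m := by
  have hb : b ∈ S := by obtain ⟨_, c, _, _, rfl, h⟩ := h; exact h _
  have := h.trans (Reach.seg (a := b) (b := b) (l := m - l) (by simpa using hm) (fun _ _ _ => by simpa using hb))
  simpa using this

section
variable {E : Type*} [NormedAddCommGroup E] [InnerProductSpace ℝ E]
open scoped RealInnerProductSpace

theorem not_int {K : Set E} {u z : E} (hu : u ≠ 0) (h : ∀ k ∈ K, ⟪u, k⟫ ≤ ⟪u, z⟫) :
    z ∈ (interior K)ᶜ := by
  intro hz
  have hc : Filter.Tendsto (fun t : ℝ => z + t • u) (nhdsWithin 0 (Set.Ioi 0)) (nhds z) := by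
    have : Continuous (fun t : ℝ => z + t • u) := by fun_prop
    have := this.tendsto 0
    simp only [zero_smul, add_zero] at this
    exact this.mono_left nhdsWithin_le_nhds
  have h1 := hc.eventually (mem_interior_iff_mem_nhds.1 hz)
  obtain ⟨t, ht, ht0⟩ := (h1.and self_mem_nhdsWithin).exists
  have := h _ ht
  rw [inner_add_right, inner_smul_right] at this
  have h3 : 0 < ⟪u, u⟫ := real_inner_self_pos.2 hu
  have : 0 < t * ⟪u, u⟫ := mul_pos ht0 h3
  linarith

theorem exists_proj {K : Set E} (hne : K.Nonempty) (hK : IsCompact K) (hconv : Convex ℝ K) :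
    ∃ π : E → E, LipschitzWith 1 π ∧ (∀ z, π z ∈ K) ∧
      (∀ z, z ∈ (interior K)ᶜ → π z ∈ frontier K) ∧
      (∀ z y, y ∈ K → (∀ k ∈ K, ⟪z - y, k - y⟫ ≤ 0) → π z = y) := by
  have H : ∀ z : E, ∃ p ∈ K, ∀ k ∈ K, ⟪z - p, k - p⟫ ≤ 0 := by
    intro z
    obtain ⟨p, hp, h⟩ := exists_norm_eq_iInf_of_complete_convex hne hK.isComplete hconv z
    exact ⟨p, hp, (norm_eq_iInf_iff_real_inner_le_zero hconv hp).1 h⟩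
  choose π hπ hin using H
  have key : ∀ a b p q : E, ⟪a - p, q - p⟫ ≤ 0 → ⟪b - q, p - q⟫ ≤ 0 → ‖p - q‖ ≤ ‖a - b‖ := by
    intro a b p q h1 h2
    have h3 : ‖p - q‖ ^ 2 ≤ ⟪a - b, p - q⟫ := by
      rw [← real_inner_self_eq_norm_sq]
      simp only [inner_sub_left, inner_sub_right] at *
      rw [real_inner_comm p q] at *
      linarith
    have h4 := real_inner_le_norm (a - b) (p - q)
    by_contra hc
    push Not at hc
    nlinarith [norm_nonneg (a - b)]
  refine ⟨π, ?_, hπ, ?_, ?_⟩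
  · refine LipschitzWith.of_dist_le_mul fun a b => ?_
    simp only [NNReal.coe_one, one_mul, dist_eq_norm]
    exact key a b _ _ (hin a _ (hπ b)) (hin b _ (hπ a))
  · intro z hz
    refine ⟨subset_closure (hπ z), fun hi => ?_⟩
    by_cases h0 : z - π z = 0
    · rw [sub_eq_zero] at h0
      exact hz (h0 ▸ hi)
    · refine not_int h0 (fun k hk => ?_) hi
      have := hin z k hk
      rw [inner_sub_right] at this
      linarith
  · intro z y hy h
    have := key z z (π z) y (hin z y hy) (h _ (hπ z))
    simpa [sub_eq_zero] using this

theorem exists_normal {K : Set E} (hconv : Convex ℝ K) [FiniteDimensional ℝ E]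
    (hi : (interior K).Nonempty) {x : E} (hx : x ∈ frontier K) :
    ∃ u : E, ‖u‖ = 1 ∧ ∀ k ∈ K, ⟪u, k⟫ ≤ ⟪u, x⟫ := by
  have : CompleteSpace E := FiniteDimensional.complete ℝ E
  obtain ⟨f, hf⟩ := geometric_hahn_banach_open_point hconv.interior isOpen_interior hx.2
  obtain ⟨u, rfl⟩ := (InnerProductSpace.toDual ℝ E).surjective f
  simp only [InnerProductSpace.toDual_apply_apply] at hf
  have hu : u ≠ 0 := by
    rintro rfl
    obtain ⟨z, hz⟩ := hi
    simpa using hf z hz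
  have h2 : ∀ k ∈ K, ⟪u, k⟫ ≤ ⟪u, x⟫ := by
    intro k hk
    have hk' : k ∈ closure (interior K) := by
      rw [hconv.closure_interior_eq_closure_of_nonempty_interior hi]
      exact subset_closure hk
    have hcl : IsClosed {z : E | ⟪u, z⟫ ≤ ⟪u, x⟫} := isClosed_le (by fun_prop) (by fun_prop)
    exact closure_minimal (fun z hz => (hf z hz).le) hcl hk'
  refine ⟨‖u‖⁻¹ • u, ?_, ?_⟩
  · rw [norm_smul, norm_inv, norm_norm, inv_mul_cancel₀ (norm_ne_zero_iff.2 hu)]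
  · intro k hk
    rw [real_inner_smul_left, real_inner_smul_left]
    exact mul_le_mul_of_nonneg_left (h2 k hk) (by positivity)

theorem exists_frame [FiniteDimensional ℝ E] (hd : 2 ≤ Module.finrank ℝ E) {u v : E} (hu : ‖u‖ = 1) :
    ∃ w : E, ‖w‖ = 1 ∧ ⟪u, w⟫ = 0 ∧ ∃ b : ℝ, 0 ≤ b ∧ v = ⟪u, v⟫ • u + b • w := by
  have huu : ⟪u, u⟫ = 1 := by rw [real_inner_self_eq_norm_sq, hu]; norm_num
  by_cases h : v - ⟪u, v⟫ • u = 0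
  · have : ∃ w : E, w ≠ 0 ∧ ⟪u, w⟫ = 0 := by
      by_contra hc
      push Not at hc
      have hbot : (ℝ ∙ u)ᗮ = ⊥ := by
        rw [eq_bot_iff]
        intro z hz
        rw [Submodule.mem_orthogonal_singleton_iff_inner_right] at hz
        by_contra h0
        exact hc z h0 hz
      have h1 := Submodule.finrank_add_finrank_orthogonal (ℝ ∙ u)
      rw [hbot, finrank_bot] at h1
      have h2 := finrank_span_le_card (R := ℝ) ({u} : Set E)
      simp at h2
      omega
    obtain ⟨w, hw, huw⟩ := this
    refine ⟨‖w‖⁻¹ • w, ?_, ?_, 0, le_rfl, ?_⟩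
    · rw [norm_smul, norm_inv, norm_norm, inv_mul_cancel₀ (norm_ne_zero_iff.2 hw)]
    · rw [inner_smul_right, huw, mul_zero]
    · rw [zero_smul, add_zero]; exact sub_eq_zero.1 h
  · set w := v - ⟪u, v⟫ • u with hw
    refine ⟨‖w‖⁻¹ • w, ?_, ?_, ‖w‖, norm_nonneg _, ?_⟩
    · rw [norm_smul, norm_inv, norm_norm, inv_mul_cancel₀ (norm_ne_zero_iff.2 h)]
    · rw [inner_smul_right, hw, inner_sub_right, inner_smul_right, huu]; ring
    · rw [smul_smul, mul_inv_cancel₀ (norm_ne_zero_iff.2 h), one_smul, hw]; abel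

theorem Reach.segH {K : Set E} {u a b : E} {c l : ℝ} (hu : ‖u‖ = 1) (h : ∀ k ∈ K, ⟪u, k⟫ ≤ c)
    (ha : c ≤ ⟪u, a⟫) (hb : c ≤ ⟪u, b⟫) (hl : ‖b - a‖ ≤ l) : Reach (interior K)ᶜ a b l := by
  refine Reach.seg hl fun t h0 h1 => not_int (u := u) (by rintro rfl; simp at hu) fun k hk => ?_
  refine (h k hk).trans ?_
  rw [inner_add_right, inner_smul_right, inner_sub_right]
  nlinarith

theorem core {K : Set E} (hK : IsCompact K) {x y u v w : E} {b : ℝ}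
    (hx : x ∈ K) (hy : y ∈ K) (hu : ‖u‖ = 1) (hw : ‖w‖ = 1) (huw : ⟪u, w⟫ = 0) (hv : ‖v‖ = 1)
    (hb : 0 ≤ b) (hvuw : v = ⟪u, v⟫ • u + b • w) (hux : ∀ k ∈ K, ⟪u, k⟫ ≤ ⟪u, x⟫) :
    ∃ t : ℝ, 0 ≤ t ∧ Reach (interior K)ᶜ x (y + t • v) (3 * Metric.diam K) := by
  set D := Metric.diam K with hD
  set α := ⟪u, v⟫ with hα
  have hD0 : 0 ≤ D := Metric.diam_nonneg
  have hdist : ∀ k ∈ K, ∀ k' ∈ K, ‖k - k'‖ ≤ D := fun k hk k' hk' => by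
    rw [← dist_eq_norm]; exact Metric.dist_le_diam_of_mem hK.isBounded hk hk'
  have hin : ∀ e : E, ‖e‖ = 1 → ∀ k ∈ K, ∀ k' ∈ K, ⟪e, k⟫ - ⟪e, k'⟫ ≤ D := by
    intro e he k hk k' hk'
    rw [← inner_sub_right]
    have := real_inner_le_norm e (k - k')
    rw [he, one_mul] at this
    exact this.trans (hdist k hk k' hk')
  have huu : ⟪u, u⟫ = 1 := by rw [real_inner_self_eq_norm_sq, hu]; norm_num
  have hww : ⟪w, w⟫ = 1 := by rw [real_inner_self_eq_norm_sq, hw]; norm_num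
  have hwu : ⟪w, u⟫ = 0 := by rw [real_inner_comm]; exact huw
  have hwv : ⟪w, v⟫ = b := by
    rw [hvuw, inner_add_right, inner_smul_right, inner_smul_right, hwu, hww]; ring
  obtain ⟨kR, hkR, hR⟩ := hK.exists_isMaxOn ⟨x, hx⟩ (f := fun z => ⟪w, z⟫) (by fun_prop)
  obtain ⟨kL, hkL, hL⟩ := hK.exists_isMinOn ⟨x, hx⟩ (f := fun z => ⟪w, z⟫) (by fun_prop)
  set R := ⟪w, kR⟫ with hRdef
  set L := ⟪w, kL⟫ with hLdef
  have hR : ∀ k ∈ K, ⟪w, k⟫ ≤ R := fun k hk => hR hk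
  have hL : ∀ k ∈ K, L ≤ ⟪w, k⟫ := fun k hk => hL hk
  have hRL : R - L ≤ D := hin w hw _ hkR _ hkL
  have hUy : ⟪u, y⟫ - ⟪u, x⟫ ≤ 0 := by linarith [hux y hy]
  have hUy' : -D ≤ ⟪u, y⟫ - ⟪u, x⟫ := by linarith [hin u hu x hx y hy]
  set Uy := ⟪u, y⟫ - ⟪u, x⟫ with hUydef
  set Wy := ⟪w, y⟫ with hWydef
  set Wx := ⟪w, x⟫ with hWxdef
  -- exit time
  have hexit : ∃ t : ℝ, 0 ≤ t ∧ Uy + t * α ≤ 0 ∧ -D ≤ Uy + t * α ∧ Wy + t * b ≤ R ∧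
      (Uy + t * α = 0 ∨ Uy + t * α = -D ∨ Wy + t * b = R) := by
    let f : ℝ → ℝ := fun t => max (max (Uy + t * α) (-D - (Uy + t * α))) (Wy + t * b - R)
    have hf : Continuous f := by fun_prop
    have hf0 : f 0 ≤ 0 := by
      simp only [f, zero_mul, add_zero]
      exact max_le (max_le hUy (by linarith)) (by linarith [hR y hy])
    have hT : ∃ T, 0 ≤ T ∧ 0 ≤ f T := by
      rcases lt_trichotomy α 0 with h | h | h
      · refine ⟨(-D - Uy) / α, div_nonneg_of_nonpos (by linarith) h.le, ?_⟩
        refine le_max_of_le_left (le_max_of_le_right ?_)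
        rw [div_mul_cancel₀ _ h.ne]; linarith
      · have hb1 : b = 1 := by
          rw [h, zero_smul, zero_add] at hvuw
          rw [hvuw, norm_smul, hw, mul_one, Real.norm_eq_abs, abs_of_nonneg hb] at hv
          exact hv
        refine ⟨R - Wy, by linarith [hR y hy], le_max_of_le_right ?_⟩
        rw [hb1]; linarith
      · refine ⟨(-Uy) / α, div_nonneg (by linarith) h.le, ?_⟩
        refine le_max_of_le_left (le_max_of_le_left ?_)
        rw [div_mul_cancel₀ _ h.ne']; linarith
    obtain ⟨T, hT0, hfT⟩ := hT
    obtain ⟨t, ht, hft⟩ := intermediate_value_Icc hT0 hf.continuousOn ⟨hf0, hfT⟩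
    have h1 : Uy + t * α ≤ 0 := hft ▸ (le_max_left _ _).trans (le_max_left _ _)
    have h2 : -D - (Uy + t * α) ≤ 0 := hft ▸ (le_max_right _ _).trans (le_max_left _ _)
    have h3 : Wy + t * b - R ≤ 0 := hft ▸ le_max_right _ _
    refine ⟨t, ht.1, h1, by linarith, by linarith, ?_⟩
    by_contra hc
    push Not at hc
    have g1 := lt_of_le_of_ne h1 hc.1
    have g2 : -D - (Uy + t * α) < 0 := lt_of_le_of_ne h2 fun h => hc.2.1 (by linarith)
    have g3 : Wy + t * b - R < 0 := lt_of_le_of_ne h3 fun h => hc.2.2 (by linarith)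
    have : f t < 0 := max_lt (max_lt g1 g2) g3
    linarith
  obtain ⟨t, ht0, hU0, hUD, hWR, hcase⟩ := hexit
  refine ⟨t, ht0, ?_⟩
  have hWL : L ≤ Wy + t * b := by linarith [hL y hy, mul_nonneg ht0 hb]
  set U' := Uy + t * α with hU'
  set W' := Wy + t * b with hW'
  have hxR := hR x hx
  have hxL := hL x hx
  let q : E := y - Uy • u - (Wy - Wx) • w
  have hq : ∀ c d : ℝ, ⟪u, q + c • u + d • w⟫ = ⟪u, x⟫ + c := by
    intro c d
    simp only [q, inner_add_right, inner_sub_right, inner_smul_right, huu, huw, hUydef]; ring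
  have hq' : ∀ c d : ℝ, ⟪w, q + c • u + d • w⟫ = Wx + d := by
    intro c d
    simp only [q, inner_add_right, inner_sub_right, inner_smul_right, hww, hwu]
    rw [← hWydef]; ring
  have hy' : y + t • v = q + U' • u + (W' - Wx) • w := by
    rw [hvuw]; simp only [q, hU', hW']; module
  have hqx : ‖q - x‖ ≤ D := by
    refine le_trans ?_ (hdist y hy x hx)
    have e : y - x = (q - x) + (Uy • u + (Wy - Wx) • w) := by simp only [q]; module
    have ho : ⟪q - x, Uy • u + (Wy - Wx) • w⟫ = 0 := by
      have a1 : ⟪q - x, u⟫ = 0 := by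
        rw [real_inner_comm, inner_sub_right]
        have := hq 0 0; simp only [zero_smul, add_zero] at this; rw [this]; ring
      have a2 : ⟪q - x, w⟫ = 0 := by
        rw [real_inner_comm, inner_sub_right]
        have := hq' 0 0; simp only [zero_smul, add_zero] at this; rw [this]; ring
      rw [inner_add_right, inner_smul_right, inner_smul_right, a1, a2]; ring
    have := norm_add_sq_eq_norm_sq_add_norm_sq_of_inner_eq_zero _ _ ho
    rw [← e] at this
    by_contra hc
    push Not at hc
    nlinarith [norm_nonneg (y - x), norm_nonneg (q - x), mul_self_nonneg ‖Uy • u + (Wy - Wx) • w‖]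
  have hnw : ∀ c d d' : ℝ, ‖(q + c • u + d' • w) - (q + c • u + d • w)‖ = |d' - d| := by
    intro c d d'
    rw [add_sub_add_left_eq_sub, ← sub_smul, norm_smul, hw, mul_one, Real.norm_eq_abs]
  have hnu : ∀ c c' d : ℝ, ‖(q + c' • u + d • w) - (q + c • u + d • w)‖ = |c' - c| := by
    intro c c' d
    rw [add_sub_add_right_eq_sub, add_sub_add_left_eq_sub, ← sub_smul, norm_smul, hu, mul_one,
      Real.norm_eq_abs]
  have s1 : Reach (interior K)ᶜ x (q + (0:ℝ) • u + (0:ℝ) • w) D :=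
    Reach.segH hu hux le_rfl (by rw [hq]; simp) (by simpa using hqx)
  have s2 : ∀ d, Reach (interior K)ᶜ (q + (0:ℝ) • u + (0:ℝ) • w) (q + (0:ℝ) • u + d • w) |d| := fun d =>
    Reach.segH hu hux (by rw [hq]; simp) (by rw [hq]; simp) (by rw [hnw]; simp)
  have s3 : ∀ c, Reach (interior K)ᶜ (q + (0:ℝ) • u + (R - Wx) • w) (q + c • u + (R - Wx) • w) |c| := fun c =>
    Reach.segH hw hR (by rw [hq']; simp) (by rw [hq']; simp) (by rw [hnu]; simp)
  have s3' : ∀ c, Reach (interior K)ᶜ (q + (0:ℝ) • u + (L - Wx) • w) (q + c • u + (L - Wx) • w) |c| := fun c =>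
    Reach.segH (u := -w) (c := -L) (by simpa using hw)
      (fun k hk => by rw [inner_neg_left]; linarith [hL k hk])
      (by rw [inner_neg_left, hq']; simp) (by rw [inner_neg_left, hq']; simp) (by rw [hnu]; simp)
  have s4 : ∀ d d', Reach (interior K)ᶜ (q + (-D) • u + d • w) (q + (-D) • u + d' • w) |d' - d| := fun d d' =>
    Reach.segH (u := -u) (c := D - ⟪u, x⟫) (by simpa using hu)
      (fun k hk => by rw [inner_neg_left]; linarith [hin u hu x hx k hk])
      (by rw [inner_neg_left, hq]; linarith) (by rw [inner_neg_left, hq]; linarith) (by rw [hnw])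
  rw [hy']
  rcases hcase with h | h | h
  · rw [h]
    refine (s1.trans (s2 _)).mono ?_
    have : |W' - Wx| ≤ D := abs_le.2 ⟨by linarith, by linarith⟩
    linarith
  · rw [h]
    rcases le_total ((R - Wx) + (R - W')) D with g | g
    · refine (((s1.trans (s2 _)).trans (s3 _)).trans (s4 _ _)).mono ?_
      rw [abs_of_nonneg (by linarith : 0 ≤ R - Wx), abs_of_nonpos (by linarith : -D ≤ 0),
        abs_of_nonpos (by linarith)]
      linarith
    · refine (((s1.trans (s2 _)).trans (s3' _)).trans (s4 _ _)).mono ?_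
      rw [abs_of_nonpos (by linarith : L - Wx ≤ 0), abs_of_nonpos (by linarith : -D ≤ 0),
        abs_of_nonneg (by linarith)]
      linarith
  · rw [h]
    refine ((s1.trans (s2 _)).trans (s3 _)).mono ?_
    rw [abs_of_nonneg (by linarith : 0 ≤ R - Wx), abs_of_nonpos hU0]
    linarith

theorem finish {S T : Set E} {z x y : E} {π : E → E} {l : ℝ} (hπ : LipschitzWith 1 π)
    (hST : ∀ z ∈ S, π z ∈ T) (h : Reach S x z l) (hx : π x = x) (hy : π z = y) :
    ∃ γ : ℝ → E, ContinuousOn γ (Set.Icc 0 1) ∧ γ 0 = x ∧ γ 1 = y ∧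
      γ '' Set.Icc 0 1 ⊆ T ∧ eVariationOn γ (Set.Icc 0 1) ≤ ENNReal.ofReal l := by
  obtain ⟨hl, c, hc, c0, cl, cS⟩ := h
  have hL : LipschitzWith 1 (π ∘ c) := by simpa using hπ.comp hc
  refine ⟨(π ∘ c) ∘ fun t => l * t, ?_, by simp [c0, hx], by simp [cl, hy], ?_, ?_⟩
  · exact (hL.continuous.comp (by fun_prop)).continuousOn
  · rintro _ ⟨t, _, rfl⟩
    exact hST _ (cS _)
  · refine ((hL.lipschitzOnWith (s := Set.univ)).comp_eVariationOn_le (Set.mapsTo_univ _ _)).trans ?_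
    have hm : MonotoneOn (fun t : ℝ => l * t) (Set.Icc 0 1) := fun a _ b _ hab =>
      mul_le_mul_of_nonneg_left hab hl
    have := hm.eVariationOn_le (a := 0) (b := 1) (by simp) (by simp)
    simpa using this

end

/-- Let `n ≥ 2` and let `K` be a nonempty compact convex subset of `ℝⁿ`.
Then any two points of the frontier of `K` are joined by a continuous path inside the
frontier whose length (total variation) is at most `3 · diam K`: the intrinsic diameter of
the boundary of a compact convex body is at most three times its extrinsic diameter. -/
theorem intrinsic_diameter_le_three_extrinsic
    (n : ℕ) (hn : 2 ≤ n)
    (K : Set (EuclideanSpace ℝ (Fin n)))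
    (hKne : K.Nonempty) (hKcomp : IsCompact K) (hKconv : Convex ℝ K)
    (x y : EuclideanSpace ℝ (Fin n)) (hx : x ∈ frontier K) (hy : y ∈ frontier K) :
    ∃ γ : ℝ → EuclideanSpace ℝ (Fin n),
      ContinuousOn γ (Set.Icc 0 1) ∧ γ 0 = x ∧ γ 1 = y ∧
      γ '' Set.Icc 0 1 ⊆ frontier K ∧
      eVariationOn γ (Set.Icc 0 1) ≤ ENNReal.ofReal (3 * Metric.diam K) := by
  obtain ⟨π, hπ, hπK, hπf, hπe⟩ := exists_proj hKne hKcomp hKconv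
  have hxK : x ∈ K := hKcomp.isClosed.frontier_subset hx
  have hyK : y ∈ K := hKcomp.isClosed.frontier_subset hy
  have hπx : π x = x := hπe x x hxK (by simp)
  by_cases hi : (interior K).Nonempty
  · obtain ⟨u, hu, hux⟩ := exists_normal hKconv hi hx
    obtain ⟨v, hv, hvy⟩ := exists_normal hKconv hi hy
    obtain ⟨w, hw, huw, b, hb, hvuw⟩ := exists_frame (by simpa using hn) (v := v) hu
    obtain ⟨t, ht, hr⟩ := core hKcomp hxK hyK hu hw huw hv hb hvuw hux
    refine finish hπ hπf hr hπx (hπe _ _ hyK fun k hk => ?_)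
    rw [add_sub_cancel_left, real_inner_smul_left, inner_sub_right]
    exact mul_nonpos_of_nonneg_of_nonpos ht (by linarith [hvy k hk])
  · have hr : Reach (interior K)ᶜ x y (3 * Metric.diam K) := by
      refine Reach.seg ?_ fun t _ _ h => hi ⟨_, h⟩
      rw [← dist_eq_norm]
      have := Metric.dist_le_diam_of_mem hKcomp.isBounded hyK hxK
      linarith [Metric.diam_nonneg (s := K)]
    exact finish hπ hπf hr hπx (hπe y y hyK (by simp))
end
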